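/- Let ℓ ≥ 2, m ≥ 9 and n ≥ m² − m + 1 be integers and let T be any tree on n vertices. Then every graph G on ℓ(n − 1) + 1 vertices either contains the graph K_{ℓ−1} + mK_2 as a subgraph or its complement contains T as a subgraph. (This is the upper bound direction of the equality R(T, K_{ℓ−1} + mK_2) = ℓ(n − 1) + 1.) -/

import Mathlib

/-- `Contains G H` means `G` contains a subgraph isomorphic to `H`, i.e. there is an
injective map on vertices preserving adjacency. -/
def Contains {α β : Type*} (G : SimpleGraph α) (H : SimpleGraph β) : Prop :=
  ∃ f : β → α, Function.Injective f ∧ ∀ ⦃u v⦄, H.Adj u v → G.Adj (f u) (f v)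

/-- The join `K_l + mK_2`: a complete graph on `l` vertices joined to a disjoint union of
`m` edges.  (For `l = 1` this is the fan `F_m`.) -/
def cliqueJoinMatching (l m : ℕ) : SimpleGraph (Fin l ⊕ Fin m × Bool) :=
  SimpleGraph.fromRel (fun x y =>
    (∃ a, x = Sum.inl a) ∨ ∃ i : Fin m, x = Sum.inr (i, true) ∧ y = Sum.inr (i, false))

/-!
By induction on `ℓ`, a vertex of large degree in `G` allows us to pass to its neighbourhood, and if
there is none then `T` embeds greedily into `Gᶜ`. This leaves `ℓ = 2`, where `G` has `2n - 1`
vertices and contains no fan: with `m = k + 1`, no neighbourhood in `G` has a matching of `k + 1`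
edges, so a vertex of degree at least `n` has an independent set of size `n - 2k`, a clique of `Gᶜ`,
among its neighbours. Let `I` and `J` be two disjoint cliques of this kind. If some vertex has
`n - 1` neighbours in `Gᶜ` within `I ∪ J`, then `T` embeds by splitting it at a centroid. Otherwise
`G` is nearly bipartite: there is a partition `X ∪ Xᶜ` with `I ⊆ X` and `J ⊆ Xᶜ`, in which `G` has
small degree inside each part. As `n ≥ k² + k + 1`, the tree has many leaves at one vertex or many
well-separated vertices of degree at most two. In the second case these vertices provide the room to
embed `T` into `Gᶜ`, mostly into the clique in the larger part and with a few vertices in the rest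
of that part. In the first case, unless `T` embeds into `Gᶜ`, every vertex of `G` has degree at
least `n`, and a double count of the edges inside the larger part gives a contradiction.
-/

open Finset

noncomputable section

attribute [local instance] Classical.propDecidable

variable {V W : Type*}

/-- The number of neighbours of `w` in the vertex set `S`. -/
def degreeIn (G : SimpleGraph W) (w : W) (S : Finset W) : ℕ :=
  #{x ∈ S | G.Adj w x}

section DegreeIn

variable {G : SimpleGraph W} {w : W} {S S' : Finset W}

lemma degreeIn_mono (h : S ⊆ S') : degreeIn G w S ≤ degreeIn G w S' :=
  card_le_card (filter_subset_filter _ h)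

lemma degreeIn_le_card : degreeIn G w S ≤ #S :=
  card_filter_le _ _

lemma card_le_degreeIn (h : S ⊆ S') (hS : ∀ x ∈ S, G.Adj w x) : #S ≤ degreeIn G w S' :=
  card_le_card fun x hx ↦ mem_filter.2 ⟨h hx, hS x hx⟩

lemma degreeIn_pos_iff : 0 < degreeIn G w S ↔ ∃ x ∈ S, G.Adj w x := by
  simp [degreeIn, card_pos, Finset.Nonempty]

lemma degreeIn_union (h : Disjoint S S') :
    degreeIn G w (S ∪ S') = degreeIn G w S + degreeIn G w S' := by
  rw [degreeIn, filter_union, card_union_of_disjoint (disjoint_filter_filter h), degreeIn, degreeIn]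

lemma degreeIn_union_le : degreeIn G w (S ∪ S') ≤ degreeIn G w S + degreeIn G w S' := by
  rw [degreeIn, filter_union]
  exact card_union_le _ _

lemma degreeIn_sdiff_add (h : S ⊆ S') :
    degreeIn G w (S' \ S) + degreeIn G w S = degreeIn G w S' := by
  rw [← degreeIn_union sdiff_disjoint, sdiff_union_of_subset h]

lemma degreeIn_add_degreeIn_compl [Fintype W] :
    degreeIn G w S + degreeIn G w Sᶜ = G.degree w := by
  rw [← degreeIn_union disjoint_compl_right, union_compl, degreeIn,
    ← G.card_neighborFinset_eq_degree, G.neighborFinset_eq_filter]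

lemma degreeIn_le_degree [Fintype W] : degreeIn G w S ≤ G.degree w :=
  degreeIn_add_degreeIn_compl (S := S) ▸ Nat.le_add_right _ _

lemma degreeIn_erase_self : degreeIn G w (S.erase w) = degreeIn G w S := by
  rw [degreeIn, filter_erase, erase_eq_of_notMem (by simp), degreeIn]

lemma degreeIn_add_compl (h : w ∉ S) : degreeIn G w S + degreeIn Gᶜ w S = #S := by
  have hcompl : degreeIn Gᶜ w S = #{x ∈ S | ¬ G.Adj w x} :=
    congrArg card <| by
      ext x
      simp only [mem_filter, SimpleGraph.compl_adj, and_congr_right_iff]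
      exact fun hx ↦ and_iff_right (ne_of_mem_of_not_mem hx h).symm
  rw [hcompl, ← card_filter_add_card_filter_not (s := S) (G.Adj w), degreeIn]

lemma degreeIn_add_compl_add_one (h : w ∈ S) : degreeIn G w S + degreeIn Gᶜ w S + 1 = #S := by
  rw [← card_erase_add_one h, ← degreeIn_add_compl (notMem_erase w S), degreeIn_erase_self,
    degreeIn_erase_self]

lemma degreeIn_eq_zero_of_isIndepSet (hS : G.IsIndepSet ↑S) (hw : w ∈ S) : degreeIn G w S = 0 :=
  card_eq_zero.2 <| filter_eq_empty_iff.2 fun _ hx h ↦ hS hw hx h.ne h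

lemma sum_degreeIn_comm {A B : Finset W} :
    ∑ a ∈ A, degreeIn G a B = ∑ b ∈ B, degreeIn G b A := by
  simp only [degreeIn, card_filter]
  rw [sum_comm]
  simp only [G.adj_comm]

lemma exists_degreeIn_le {A B : Finset W} {k d : ℕ} (hB : ∀ b ∈ B, degreeIn G b A ≤ k)
    (hcard : #B * k < (d + 1) * #A) : ∃ a ∈ A, degreeIn G a B ≤ d := by
  by_contra! h
  have hA : #A • (d + 1) ≤ ∑ a ∈ A, degreeIn G a B := card_nsmul_le_sum _ _ _ h
  have hB : ∑ b ∈ B, degreeIn G b A ≤ #B • k := sum_le_card_nsmul _ _ _ hB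
  rw [sum_degreeIn_comm, smul_eq_mul, mul_comm] at hA
  rw [smul_eq_mul] at hB
  omega

lemma exists_forall_adj {A : Finset W} {d : ℕ} (h : ∀ y ∈ S, #A ≤ degreeIn G y A + d)
    (hcard : #S * d < #A) : ∃ a ∈ A, ∀ y ∈ S, G.Adj y a := by
  by_contra! hno
  have hcover : A ⊆ S.biUnion fun y ↦ {a ∈ A | ¬ G.Adj y a} := fun a ha ↦ by
    obtain ⟨y, hy, hya⟩ := hno a ha
    exact mem_biUnion.2 ⟨y, hy, mem_filter.2 ⟨ha, hya⟩⟩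
  refine absurd ((card_le_card hcover).trans (card_biUnion_le_card_mul _ _ d fun y hy ↦ ?_))
    hcard.not_ge
  have := card_filter_add_card_filter_not (s := A) (G.Adj y)
  have := h y hy
  rw [degreeIn] at this
  lia

end DegreeIn

/-- `G` has a matching with `q` edges inside `S`. It is encoded by the set `A` of one chosen
endpoint per edge and the function `g` sending such an endpoint to its partner. -/
def HasMatchingIn (G : SimpleGraph W) (S : Finset W) (q : ℕ) : Prop :=
  ∃ (A : Finset W) (g : W → W), #A = q ∧ Set.InjOn g A ∧
    ∀ a ∈ A, a ∈ S ∧ g a ∈ S ∧ g a ∉ A ∧ G.Adj a (g a)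

section Matching

variable {G : SimpleGraph W} {S S' : Finset W} {p q : ℕ}

lemma hasMatchingIn_zero : HasMatchingIn G S 0 :=
  ⟨∅, id, by simp⟩

lemma HasMatchingIn.mono (h : S ⊆ S') : HasMatchingIn G S q → HasMatchingIn G S' q := by
  rintro ⟨A, g, hA, hg, hAg⟩
  exact ⟨A, g, hA, hg, fun a ha ↦ (hAg a ha).imp (@h a) (And.imp_left (@h (g a)))⟩

lemma HasMatchingIn.mono_right (h : p ≤ q) : HasMatchingIn G S q → HasMatchingIn G S p := by
  rintro ⟨A, g, rfl, hg, hAg⟩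
  obtain ⟨B, hBA, rfl⟩ := exists_subset_card_eq h
  refine ⟨B, g, rfl, hg.mono hBA, fun b hb ↦ ?_⟩
  obtain ⟨hS, hgS, hgA, hadj⟩ := hAg b (hBA hb)
  exact ⟨hS, hgS, fun h ↦ hgA (hBA h), hadj⟩

lemma HasMatchingIn.union (hd : Disjoint S S') :
    HasMatchingIn G S p → HasMatchingIn G S' q → HasMatchingIn G (S ∪ S') (p + q) := by
  rintro ⟨A, g, rfl, hg, hA⟩ ⟨B, f, rfl, hf, hB⟩
  have hd' : ∀ ⦃x⦄, x ∈ S → x ∉ S' := disjoint_left.1 hd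
  have hAB : Disjoint A B := disjoint_left.2 fun x hxA hxB ↦ hd' (hA x hxA).1 (hB x hxB).1
  have hBA : ∀ b ∈ B, b ∉ A := fun b hb hbA ↦ disjoint_left.1 hAB hbA hb
  refine ⟨A ∪ B, fun x ↦ if x ∈ A then g x else f x, card_union_of_disjoint hAB, ?_, fun x hx ↦ ?_⟩
  · rw [coe_union, Set.injOn_union (disjoint_coe.2 hAB)]
    refine ⟨hg.congr fun x hx ↦ (if_pos hx).symm,
      hf.congr fun x hx ↦ (if_neg (hBA x hx)).symm, fun a ha b hb h ↦ ?_⟩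
    simp only [mem_coe.1 ha, hBA b hb, if_true, if_false] at h
    exact hd' (hA a ha).2.1 (h ▸ (hB b hb).2.1)
  · obtain hx | hx := mem_union.1 hx
    · obtain ⟨h₁, h₂, h₃, h₄⟩ := hA x hx
      simp only [hx, if_true, mem_union, not_or]
      exact ⟨.inl h₁, .inl h₂, ⟨h₃, fun h ↦ hd' h₂ (hB _ h).1⟩, h₄⟩
    · obtain ⟨h₁, h₂, h₃, h₄⟩ := hB x hx
      simp only [hBA x hx, if_false, mem_union, not_or]
      exact ⟨.inr h₁, .inr h₂, ⟨fun h ↦ hd' (hA _ h).1 h₂, h₃⟩, h₄⟩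

lemma hasMatchingIn_pair {a b : W} (hab : G.Adj a b) : HasMatchingIn G {a, b} 1 :=
  ⟨{a}, fun _ ↦ b, by simp, by simp, by simp [hab, hab.ne']⟩

lemma HasMatchingIn.cons {a b : W} (ha : a ∈ S) (hb : b ∈ S) (hab : G.Adj a b)
    (h : HasMatchingIn G ((S.erase a).erase b) q) : HasMatchingIn G S (q + 1) := by
  refine (h.union ?_ (hasMatchingIn_pair hab)).mono fun x ↦ ?_
  · simp
  · simp only [mem_union, mem_erase, mem_insert, mem_singleton]
    rintro (h | rfl | rfl)
    exacts [h.2.2, ha, hb]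

lemma HasMatchingIn.exists_subset_card_eq_two_mul :
    HasMatchingIn G S q → ∃ S' ⊆ S, #S' = 2 * q ∧ HasMatchingIn G S' q := by
  rintro ⟨A, g, rfl, hg, hA⟩
  refine ⟨A ∪ A.image g, ?_, ?_, A, g, rfl, hg, fun a ha ↦ ?_⟩
  · rw [union_subset_iff, image_subset_iff]
    exact ⟨fun a ha ↦ (hA a ha).1, fun a ha ↦ (hA a ha).2.1⟩
  · rw [card_union_of_disjoint, card_image_of_injOn hg, two_mul]
    rw [disjoint_right]
    simp only [mem_image, forall_exists_index, and_imp, forall_apply_eq_imp_iff₂]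
    exact fun a ha ↦ (hA a ha).2.2.1
  · exact ⟨mem_union_left _ ha, mem_union_right _ (mem_image_of_mem g ha), (hA a ha).2.2⟩

lemma card_le_card_erase_erase_add_two (a b : W) : #S ≤ #((S.erase a).erase b) + 2 := by
  have := pred_card_le_card_erase (s := S) (a := a)
  have := pred_card_le_card_erase (s := S.erase a) (a := b)
  omega

lemma exists_isIndepSet_of_not_hasMatchingIn :
    ∀ {q : ℕ} {S : Finset W}, ¬ HasMatchingIn G S (q + 1) →
      ∃ J ⊆ S, G.IsIndepSet ↑J ∧ #S ≤ #J + 2 * q := by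
  intro q
  induction q with
  | zero =>
    intro S h
    exact ⟨S, subset_rfl, fun a ha b hb _ hab ↦ h (hasMatchingIn_zero.cons ha hb hab), by simp⟩
  | succ q ih =>
    intro S h
    by_cases hS : G.IsIndepSet ↑S
    · exact ⟨S, subset_rfl, hS, by omega⟩
    obtain ⟨a, ha, b, hb, hab⟩ : ∃ a ∈ S, ∃ b ∈ S, G.Adj a b := by
      by_contra! hno
      exact hS fun a ha b hb _ ↦ hno a ha b hb
    obtain ⟨J, hJ, hindep, hcard⟩ := ih fun hM ↦ h (hM.cons ha hb hab)
    have := card_le_card_erase_erase_add_two (S := S) a b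
    exact ⟨J, hJ.trans ((erase_subset _ _).trans (erase_subset _ _)), hindep, by omega⟩

lemma exists_injOn_of_forall_card_le_add {α β : Type*} [Nonempty β] (r : α → β → Prop)
    {A : Finset α} {B : Finset β} {d : ℕ}
    (hall : ∀ S ⊆ A, #S ≤ #{b ∈ B | ∃ a ∈ S, r a b} + d) :
    ∃ A' ⊆ A, #A ≤ #A' + d ∧
      ∃ g : α → β, Set.InjOn g A' ∧ ∀ a ∈ A', g a ∈ B ∧ r a (g a) := by
  -- Add `d` dummy elements related to everything and apply Hall's theorem.
  let t : A → Finset (β ⊕ Fin d) := fun a ↦ ({b ∈ B | r a b} : Finset β).disjSum univ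
  obtain ⟨f, hf, hft⟩ := (all_card_le_biUnion_card_iff_exists_injective t).1 fun s ↦ by
    obtain rfl | ⟨a₀, ha₀⟩ := s.eq_empty_or_nonempty
    · simp
    calc #s = #(s.map (.subtype _)) := (card_map _).symm
      _ ≤ #(({b ∈ B | ∃ a ∈ s.map (.subtype _), r a b} : Finset β).disjSum
            (univ : Finset (Fin d))) := by
          simpa using hall (s.map (.subtype _)) fun a ha ↦ property_of_mem_map_subtype s ha
      _ ≤ #(s.biUnion t) := card_le_card fun x hx ↦ by
          obtain x | i := x
          · simpa [t, and_assoc, and_comm, and_left_comm, ← exists_and_left] using hx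
          · exact mem_biUnion.2 ⟨a₀, ha₀, by simp [t]⟩
  let A' : Finset α := {a ∈ A | ∃ b, ∃ h : a ∈ A, f ⟨a, h⟩ = .inl b}
  have hA' : ∀ a ∈ A', ∃ b, ∃ h : a ∈ A, f ⟨a, h⟩ = .inl b := fun a ha ↦ (mem_filter.1 ha).2
  choose! g hgA hfg using hA'
  refine ⟨A', filter_subset _ _, ?_, g, fun a ha b hb hab ↦ ?_, fun a ha ↦ ?_⟩
  · have hrange : univ.image f ⊆ (A'.image g).disjSum univ := image_subset_iff.2 fun a _ ↦ by
      cases hfa : f a with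
      | inl b =>
        have ha : ↑a ∈ A' := mem_filter.2 ⟨a.2, b, a.2, hfa⟩
        have hgb : g a = b := Sum.inl_injective ((hfg a ha).symm.trans hfa)
        exact inl_mem_disjSum.2 (hgb ▸ mem_image_of_mem g ha)
      | inr i => simp
    calc #A = #(univ.image f) := by rw [card_image_of_injective _ hf, card_univ, Fintype.card_coe]
      _ ≤ #((A'.image g).disjSum univ) := card_le_card hrange
      _ ≤ #A' + d := by simpa using card_image_le
  · exact Subtype.ext_iff.1 (hf ((hfg a ha).trans ((congrArg _ hab).trans (hfg b hb).symm)))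
  · have := hft ⟨a, hgA a ha⟩
    rw [hfg a ha, inl_mem_disjSum, mem_filter] at this
    exact this

lemma hasMatchingIn_of_forall_card_le_add {A B : Finset W} {d : ℕ} (hAB : Disjoint A B)
    (hall : ∀ S ⊆ A, #S ≤ #{b ∈ B | ∃ a ∈ S, G.Adj a b} + d) :
    HasMatchingIn G (A ∪ B) (#A - d) := by
  obtain rfl | ⟨a₀, -⟩ := A.eq_empty_or_nonempty
  · simpa using hasMatchingIn_zero
  have : Nonempty W := ⟨a₀⟩
  obtain ⟨A', hA', hcard, g, hg, hgB⟩ := exists_injOn_of_forall_card_le_add G.Adj hall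
  refine HasMatchingIn.mono_right (Nat.sub_le_iff_le_add.2 hcard) ⟨A', g, rfl, hg, fun a ha ↦ ?_⟩
  obtain ⟨hB, hadj⟩ := hgB a ha
  exact ⟨mem_union_left _ (hA' ha), mem_union_right _ hB,
    fun h ↦ disjoint_left.1 hAB (hA' h) hB, hadj⟩

lemma hasMatchingIn_of_forall_card_le_degreeIn {A B : Finset W} (hAB : Disjoint A B)
    (h : ∀ a ∈ A, #A ≤ degreeIn G a B) : HasMatchingIn G (A ∪ B) #A := by
  refine hasMatchingIn_of_forall_card_le_add (d := 0) hAB fun S hS ↦ ?_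
  obtain rfl | ⟨a, ha⟩ := S.eq_empty_or_nonempty
  · simp
  calc #S ≤ #A := card_le_card hS
    _ ≤ degreeIn G a B := h a (hS ha)
    _ ≤ #{b ∈ B | ∃ a ∈ S, G.Adj a b} :=
      card_le_card (monotone_filter_right B fun b _ hab ↦ ⟨a, ha, hab⟩)

/-- If the neighbours of a leaf `l` of `G[S]` reduce to `a`, take `ab = al`; otherwise any edge
works. -/
lemma exists_adj_forall_isolated_imp_adj (hS : ¬ G.IsIndepSet ↑S) :
    ∃ a ∈ S, ∃ b ∈ S, G.Adj a b ∧ ∀ v ∈ S, v ≠ a → (∃ y ∈ S, G.Adj v y) →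
      (∀ y ∈ S, G.Adj v y → y = a ∨ y = b) → G.Adj a v := by
  obtain ⟨a, ha, b, hb, hab⟩ : ∃ a ∈ S, ∃ b ∈ S, G.Adj a b := by
    by_contra! hno
    exact hS fun a ha b hb _ ↦ hno a ha b hb
  by_cases hl : ∃ l ∈ S, ∃ a ∈ S, G.Adj a l ∧ ∀ y ∈ S, G.Adj l y → y = a
  · obtain ⟨l, hlS, a, ha, hal, hu⟩ := hl
    refine ⟨a, ha, l, hlS, hal, ?_⟩
    rintro v hv hva ⟨y, hy, hvy⟩ hall
    obtain rfl | rfl := hall y hy hvy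
    · exact hvy.symm
    · exact absurd (hu v hv hvy.symm) hva
  · push Not at hl
    refine ⟨a, ha, b, hb, hab, ?_⟩
    rintro v hv hva ⟨y, hy, hvy⟩ hall
    obtain rfl | rfl := hall y hy hvy
    · exact hvy.symm
    obtain ⟨z, hz, hvz, hzy⟩ := hl v hv y hy hvy.symm
    obtain rfl := (hall z hz hvz).resolve_right hzy
    exact hvz.symm

lemma card_filter_exists_adj_le {k : ℕ} :
    ∀ {q : ℕ} {S : Finset W}, (∀ x ∈ S, degreeIn G x S ≤ k) → ¬ HasMatchingIn G S (q + 1) →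
      #{x ∈ S | ∃ y ∈ S, G.Adj x y} ≤ (k + 1) * q := by
  intro q
  induction q with
  | zero =>
    intro S _ h
    rw [mul_zero, Nat.le_zero, card_eq_zero, filter_eq_empty_iff]
    rintro x hx ⟨y, hy, hxy⟩
    exact h (hasMatchingIn_zero.cons hx hy hxy)
  | succ q ih =>
    intro S hk h
    by_cases hS : G.IsIndepSet ↑S
    · rw [filter_eq_empty_iff.2 fun x hx ⟨y, hy, hxy⟩ ↦ hS hx hy hxy.ne hxy]
      simp
    obtain ⟨a, ha, b, hb, hab, hkey⟩ := exists_adj_forall_isolated_imp_adj hS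
    set S' := (S.erase a).erase b with hS'
    have hS'S : S' ⊆ S := (erase_subset _ _).trans (erase_subset _ _)
    have hcover : ({x ∈ S | ∃ y ∈ S, G.Adj x y} : Finset W) ⊆
        {x ∈ S' | ∃ y ∈ S', G.Adj x y} ∪ insert a {x ∈ S | G.Adj a x} := fun x hx ↦ by
      obtain ⟨hxS, hx⟩ := mem_filter.1 hx
      rw [mem_union, mem_insert, mem_filter, mem_filter]
      by_contra! hno
      obtain ⟨hno', hxa, hax⟩ := hno
      refine hax hxS (hkey x hxS hxa hx fun y hy hxy ↦ ?_)
      have hxb : x ≠ b := by rintro rfl; exact hax hxS hab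
      have hxS' : x ∈ S' := by simp [hS', hxa, hxS, hxb]
      by_contra! hyab
      exact hno' hxS' y (by simp [hS', hyab, hy]) hxy
    calc _ ≤ _ := card_le_card hcover
      _ ≤ (k + 1) * q + (k + 1) := (card_union_le _ _).trans <| add_le_add
          (ih (fun x hx ↦ (degreeIn_mono hS'S).trans (hk x (hS'S hx)))
            fun hM ↦ h (hM.cons ha hb hab))
          ((card_insert_le _ _).trans (Nat.succ_le_succ (hk a ha)))
      _ = (k + 1) * (q + 1) := by ring

end Matching

/-- The restriction of `φ` to `A` is an embedding of `T[A]` into `H`. -/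
structure EmbedsOn (T : SimpleGraph V) (H : SimpleGraph W) (φ : V → W) (A : Finset V) : Prop where
  injOn : Set.InjOn φ A
  map_adj : ∀ x ∈ A, ∀ y ∈ A, T.Adj x y → H.Adj (φ x) (φ y)

/-- `S` is a union of connected components of `T - c`. -/
structure IsBranchUnion (T : SimpleGraph V) (c : V) (S : Finset V) : Prop where
  notMem : c ∉ S
  eq_of_adj : ∀ x ∈ S, ∀ y ∉ S, T.Adj x y → y = c

section Embedding

variable {T : SimpleGraph V} {H : SimpleGraph W}

lemma EmbedsOn.union {f g : V → W} {A B : Finset V} (hf : EmbedsOn T H f A)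
    (hg : EmbedsOn T H g B) (hAB : Disjoint A B) (hne : ∀ a ∈ A, ∀ b ∈ B, f a ≠ g b)
    (hadj : ∀ a ∈ A, ∀ b ∈ B, T.Adj a b → H.Adj (f a) (g b)) :
    EmbedsOn T H (A.piecewise f g) (A ∪ B) := by
  have hfA : ∀ a ∈ A, A.piecewise f g a = f a := fun a ha ↦ piecewise_eq_of_mem _ _ _ ha
  have hgB : ∀ b ∈ B, A.piecewise f g b = g b := fun b hb ↦
    piecewise_eq_of_notMem _ _ _ (disjoint_right.1 hAB hb)
  constructor
  · rw [coe_union, Set.injOn_union (disjoint_coe.2 hAB)]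
    refine ⟨hf.injOn.congr fun a ha ↦ (hfA a ha).symm, hg.injOn.congr fun b hb ↦ (hgB b hb).symm,
      fun a ha b hb ↦ ?_⟩
    rw [hfA a ha, hgB b hb]
    exact hne a ha b hb
  · intro x hx y hy hxy
    obtain hx | hx := mem_union.1 hx <;> obtain hy | hy := mem_union.1 hy
    · rw [hfA x hx, hfA y hy]
      exact hf.map_adj x hx y hy hxy
    · rw [hfA x hx, hgB y hy]
      exact hadj x hx y hy hxy
    · rw [hgB x hx, hfA y hy]
      exact (hadj y hy x hx hxy.symm).symm
    · rw [hgB x hx, hgB y hy]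
      exact hg.map_adj x hx y hy hxy

lemma EmbedsOn.congr {f g : V → W} {A : Finset V} (hf : EmbedsOn T H f A)
    (h : ∀ x ∈ A, f x = g x) : EmbedsOn T H g A :=
  ⟨hf.injOn.congr h, fun x hx y hy hxy ↦ h x hx ▸ h y hy ▸ hf.map_adj x hx y hy hxy⟩

lemma EmbedsOn.update {f : V → W} {A : Finset V} {c : V} {w : W} (hf : EmbedsOn T H f A)
    (hc : c ∉ A) (hw : ∀ a ∈ A, f a ≠ w) (hadj : ∀ a ∈ A, T.Adj c a → H.Adj w (f a)) :
    EmbedsOn T H (Function.update f c w) (insert c A) := by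
  have hsingle : EmbedsOn T H (fun _ ↦ w) {c} :=
    ⟨by simp, fun x hx y hy hxy ↦ absurd ((mem_singleton.1 hx).trans (mem_singleton.1 hy).symm)
      hxy.ne⟩
  rw [insert_eq]
  refine (hsingle.union hf (disjoint_singleton_left.2 hc) ?_ ?_).congr fun x _ ↦ ?_
  · exact fun _ _ a ha ↦ (hw a ha).symm
  · rintro x hx a ha h
    exact hadj a ha (mem_singleton.1 hx ▸ h)
  · rw [piecewise_singleton]

lemma EmbedsOn.contains [Fintype V] {f : V → W} (hf : EmbedsOn T H f univ) : Contains H T :=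
  ⟨f, fun _ _ h ↦ hf.injOn (mem_univ _) (mem_univ _) h, fun _ _ h ↦
    hf.map_adj _ (mem_univ _) _ (mem_univ _) h⟩

lemma embedsOn_of_isClique {f : V → W} {A : Finset V} {I : Finset W} (hI : H.IsClique ↑I)
    (hf : Set.InjOn f A) (hfI : ∀ a ∈ A, f a ∈ I) : EmbedsOn T H f A :=
  ⟨hf, fun x hx y hy hxy ↦ hI (hfI x hx) (hfI y hy) (hf.ne hx hy hxy.ne)⟩

lemma exists_injOn_of_card_le [Nonempty W] {A : Finset V} {B : Finset W} (h : #A ≤ #B) :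
    ∃ f : V → W, Set.InjOn f A ∧ ∀ a ∈ A, f a ∈ B := by
  obtain ⟨f, hf, hinj⟩ := A.finite_toSet.exists_injOn_of_encard_le (t := (B : Set W)) (by simpa)
  exact ⟨f, hinj, hf⟩

lemma exists_injOn_eqOn {f : V → W} {A S : Finset V} {P : Finset W} (hf : Set.InjOn f A)
    (hfP : ∀ a ∈ A, f a ∈ P) (hA : A ⊆ S) (hcard : #S ≤ #P) :
    ∃ g : V → W, Set.InjOn g S ∧ (∀ x ∈ S, g x ∈ P) ∧ ∀ a ∈ A, g a = f a := by
  obtain rfl | ⟨a, -⟩ := S.eq_empty_or_nonempty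
  · exact ⟨f, by simp, by simp, fun _ _ ↦ rfl⟩
  have : Nonempty W := ⟨f a⟩
  have himage : A.image f ⊆ P := image_subset_iff.2 hfP
  obtain ⟨g, hg, hgP⟩ := exists_injOn_of_card_le (A := S \ A) (B := P \ A.image f) <| by
    rw [card_sdiff_of_subset hA, card_sdiff_of_subset himage, card_image_of_injOn hf]
    exact Nat.sub_le_sub_right hcard _
  refine ⟨A.piecewise f g, ?_, fun x hx ↦ ?_, fun a ha ↦ piecewise_eq_of_mem _ _ _ ha⟩
  · rw [← union_sdiff_of_subset hA, coe_union, Set.injOn_union (disjoint_coe.2 disjoint_sdiff)]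
    refine ⟨hf.congr fun a ha ↦ (piecewise_eq_of_mem _ _ _ ha).symm,
      hg.congr fun x hx ↦ (piecewise_eq_of_notMem _ _ _ (mem_sdiff.1 hx).2).symm,
      fun a ha x hx ↦ ?_⟩
    rw [piecewise_eq_of_mem _ _ _ ha, piecewise_eq_of_notMem _ _ _ (mem_sdiff.1 hx).2]
    exact fun h ↦ (mem_sdiff.1 (hgP x hx)).2 (h ▸ mem_image_of_mem f ha)
  · by_cases hxA : x ∈ A
    · exact piecewise_eq_of_mem _ f g hxA ▸ hfP x hxA
    · exact piecewise_eq_of_notMem _ f g hxA ▸ (mem_sdiff.1 (hgP x (mem_sdiff.2 ⟨hx, hxA⟩))).1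

lemma exists_injOn_map_adj {c : V} {w : W} {S : Finset V} {P : Finset W} (hcard : #S ≤ #P)
    (hdeg : degreeIn T c S ≤ degreeIn H w P) :
    ∃ f : V → W, Set.InjOn f S ∧ ∀ x ∈ S, f x ∈ P ∧ (T.Adj c x → H.Adj w (f x)) := by
  have : Nonempty W := ⟨w⟩
  obtain ⟨f, hf, hfN⟩ :=
    exists_injOn_of_card_le (A := {x ∈ S | T.Adj c x}) (B := {x ∈ P | H.Adj w x}) hdeg
  obtain ⟨g, hg, hgP, hgf⟩ := exists_injOn_eqOn hf (fun a ha ↦ (mem_filter.1 (hfN a ha)).1)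
    (filter_subset _ _) hcard
  refine ⟨g, hg, fun x hx ↦ ⟨hgP x hx, fun hcx ↦ ?_⟩⟩
  have hxN := mem_filter.2 ⟨hx, hcx⟩
  exact hgf x hxN ▸ (mem_filter.1 (hfN x hxN)).2

lemma contains_of_isClique [Fintype V] {I : Finset W} (hI : H.IsClique ↑I)
    (hcard : Fintype.card V ≤ #I) : Contains H T := by
  obtain ⟨e⟩ := Function.Embedding.nonempty_of_card_le (hcard.trans_eq (Fintype.card_coe I).symm)
  have hinj : Function.Injective fun x ↦ (e x : W) := Subtype.val_injective.comp e.injective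
  exact ⟨fun x ↦ e x, hinj, fun x y h ↦ hI (e x).2 (e y).2 (hinj.ne h.ne)⟩

/-- Embed `c` at `w`, the set `S` into `P`, and the rest of `T` into the clique `Q`. -/
lemma IsBranchUnion.contains [Fintype V] {c : V} {w : W} {S : Finset V} {P Q : Finset W}
    (hS : IsBranchUnion T c S) (hwP : w ∉ P) (hwQ : w ∉ Q) (hPQ : Disjoint P Q)
    (hP : H.IsClique ↑P ∨ T.IsIndepSet ↑S) (hQ : H.IsClique ↑Q)
    (hSP : #S ≤ #P) (hcP : degreeIn T c S ≤ degreeIn H w P)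
    (hRQ : #(Sᶜ.erase c) ≤ #Q) (hcQ : degreeIn T c Sᶜ ≤ degreeIn H w Q) : Contains H T := by
  obtain ⟨f, hf, hfP⟩ := exists_injOn_map_adj hSP hcP
  rw [← degreeIn_erase_self] at hcQ
  obtain ⟨g, hg, hgQ⟩ := exists_injOn_map_adj hRQ hcQ
  have hfS : EmbedsOn T H f S := hP.elim
    (fun hP ↦ embedsOn_of_isClique hP hf fun x hx ↦ (hfP x hx).1)
    fun hS ↦ ⟨hf, fun x hx y hy hxy ↦ absurd hxy (hS hx hy hxy.ne)⟩
  have hgR : EmbedsOn T H (Function.update g c w) Sᶜ := by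
    rw [← insert_erase (mem_compl.2 hS.notMem)]
    exact (embedsOn_of_isClique hQ hg fun x hx ↦ (hgQ x hx).1).update (notMem_erase _ _)
      (fun x hx h ↦ hwQ (h ▸ (hgQ x hx).1)) fun x hx ↦ (hgQ x hx).2
  refine EmbedsOn.contains (union_compl S ▸ hfS.union hgR disjoint_compl_right ?_ ?_)
  · intro x hx y hy hxy
    obtain rfl | hyc := eq_or_ne y c
    · rw [Function.update_self] at hxy
      exact hwP (hxy ▸ (hfP x hx).1)
    · rw [Function.update_of_ne hyc] at hxy
      exact disjoint_left.1 hPQ (hfP x hx).1 (hxy ▸ (hgQ y (mem_erase.2 ⟨hyc, hy⟩)).1)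
  · intro x hx y hy hxy
    obtain rfl := hS.eq_of_adj x hx y (mem_compl.1 hy) hxy
    rw [Function.update_self]
    exact ((hfP x hx).2 hxy.symm).symm

lemma contains_of_induce_compl_singleton [Fintype V] [Fintype W] {u v : V} (hvu : T.Adj v u)
    (huniq : ∀ x, T.Adj v x → x = u) (hH : ∀ w, Fintype.card V ≤ H.degree w + 1)
    (h : Contains H (T.induce {v}ᶜ)) : Contains H T := by
  obtain ⟨f, hf, hadj⟩ := h
  obtain ⟨w, hw, hwf⟩ : ∃ w ∈ H.neighborFinset (f ⟨u, hvu.ne'⟩), w ∉ univ.image f := by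
    by_contra! hno
    have hsub : insert (f ⟨u, hvu.ne'⟩) (H.neighborFinset (f ⟨u, hvu.ne'⟩)) ⊆ univ.image f :=
      insert_subset_iff.2 ⟨mem_image_of_mem f (mem_univ _), hno⟩
    have hlt : Fintype.card ({v}ᶜ : Set V) < Fintype.card V :=
      Fintype.card_subtype_lt (p := (· ∈ ({v}ᶜ : Set V))) (x := v) (by simp)
    have := card_le_card hsub
    rw [card_insert_of_notMem (by simp), card_image_of_injective _ hf, card_univ,
      SimpleGraph.card_neighborFinset_eq_degree] at this
    have := hH (f ⟨u, hvu.ne'⟩)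
    omega
  rw [SimpleGraph.mem_neighborFinset] at hw
  have hwf : ∀ x, w ≠ f x := fun x hx ↦ hwf (hx ▸ mem_image_of_mem f (mem_univ _))
  have hstep : ∀ x y (hx : x ≠ v), T.Adj x y →
      H.Adj (f ⟨x, hx⟩) (if hy : y = v then w else f ⟨y, hy⟩) := fun x y hx hxy ↦ by
    split_ifs with hy
    · subst hy
      obtain rfl := huniq x hxy.symm
      exact hw
    · exact hadj hxy
  refine ⟨fun x ↦ if hx : x = v then w else f ⟨x, hx⟩, fun x y hxy ↦ ?_, fun x y hxy ↦ ?_⟩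
  · by_cases hx : x = v <;> by_cases hy : y = v <;> simp only [hx, hy, dif_pos, dif_neg,
      not_false_eq_true] at hxy
    · exact hx.trans hy.symm
    · exact absurd hxy (hwf _)
    · exact absurd hxy.symm (hwf _)
    · exact congrArg Subtype.val (hf hxy)
  · by_cases hx : x = v
    · have hy : y ≠ v := fun h ↦ hxy.ne (hx.trans h.symm)
      simpa [hx, hy] using (hstep y x hy hxy.symm).symm
    · simpa [hx] using hstep x y hx hxy

lemma contains_of_forall_card_le_degree [Fintype W] [Nonempty W] :
    ∀ {n : ℕ} {V : Type*} [Fintype V] {T : SimpleGraph V}, T.IsTree → Fintype.card V = n →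
      (∀ w, n ≤ H.degree w + 1) → Contains H T := by
  intro n
  induction n with
  | zero =>
    intro V _ T hT hV _
    exact absurd (Fintype.card_pos_iff.2 hT.connected.nonempty) hV.not_gt
  | succ n ih =>
    intro V _ T hT hV hH
    obtain hsub | hnontriv := subsingleton_or_nontrivial V
    · exact ⟨fun _ ↦ Classical.arbitrary W, Function.injective_of_subsingleton _,
        fun x y h ↦ absurd (Subsingleton.elim x y) h.ne⟩
    obtain ⟨v, hv⟩ := hT.exists_vert_degree_one_of_nontrivial
    obtain ⟨u, hvu, huniq⟩ := SimpleGraph.degree_eq_one_iff_existsUnique_adj.1 hv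
    refine contains_of_induce_compl_singleton hvu huniq (hV ▸ hH) (ih ⟨?_, hT.isAcyclic.induce _⟩ ?_
      fun w ↦ (hH w).trans' n.le_succ)
    · exact hT.connected.induce_compl_singleton_of_degree_eq_one hv
    · rw [← Set.toFinset_card, Set.toFinset_compl, Set.toFinset_singleton, card_compl,
        card_singleton, hV, Nat.add_sub_cancel]

end Embedding

/-- The vertex set of the component of `T - cu` that contains `u`. -/
def edgeSide [Fintype V] (T : SimpleGraph V) (c u : V) : Finset V :=
  {x | (T.deleteEdges {s(c, u)}).Reachable u x}

section Branch

variable {T : SimpleGraph V} {c u : V} {S : Finset V}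

lemma IsBranchUnion.exists_adj (hT : T.Connected) (hS : IsBranchUnion T c S)
    (hne : S.Nonempty) : ∃ u ∈ S, T.Adj c u := by
  obtain ⟨x, hx⟩ := hne
  obtain ⟨p⟩ := hT.preconnected x c
  obtain ⟨d, -, hfst, hsnd⟩ := p.exists_boundary_dart S hx hS.notMem
  exact ⟨d.fst, hfst, hS.eq_of_adj _ hfst _ hsnd d.adj ▸ d.adj.symm⟩

variable [Fintype V]

lemma self_mem_edgeSide : u ∈ edgeSide T c u := by
  simp [edgeSide]

lemma eq_and_eq_of_adj_of_mem_edgeSide {x y : V} (hx : x ∈ edgeSide T c u)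
    (hy : y ∉ edgeSide T c u) (hxy : T.Adj x y) : x = u ∧ y = c := by
  by_contra! hne
  rw [edgeSide, mem_filter_univ] at hx hy
  refine hy (hx.trans (SimpleGraph.Adj.reachable ?_))
  rw [SimpleGraph.deleteEdges_adj, Set.mem_singleton_iff, Sym2.eq_iff]
  refine ⟨hxy, ?_⟩
  rintro (⟨rfl, rfl⟩ | ⟨rfl, rfl⟩)
  · exact hy .rfl
  · exact hne rfl rfl

lemma edgeSide_subset (hu : u ∈ S)
    (hS : ∀ x ∈ S, ∀ y ∈ edgeSide T c u, T.Adj x y → y ∈ S) : edgeSide T c u ⊆ S := by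
  intro x hx
  rw [edgeSide, mem_filter_univ, SimpleGraph.reachable_iff_reflTransGen] at hx
  induction hx with
  | refl => exact hu
  | @tail y z huy hyz ih =>
    refine hS y ih z ?_ (SimpleGraph.deleteEdges_adj.1 hyz).1
    rw [edgeSide, mem_filter_univ, SimpleGraph.reachable_iff_reflTransGen]
    exact huy.tail hyz

lemma notMem_edgeSide (hT : T.IsAcyclic) (hcu : T.Adj c u) : c ∉ edgeSide T c u := by
  rw [edgeSide, mem_filter_univ]
  exact fun h ↦ SimpleGraph.isAcyclic_iff_forall_adj_isBridge.1 hT hcu h.symm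

lemma disjoint_edgeSide (hT : T.IsAcyclic) (hcu : T.Adj c u) :
    Disjoint (edgeSide T c u) (edgeSide T u c) := by
  refine disjoint_left.2 fun x hx hx' ↦ notMem_edgeSide hT hcu ?_
  rw [edgeSide, mem_filter_univ] at hx hx' ⊢
  rw [Sym2.eq_swap] at hx'
  exact hx.trans hx'.symm

lemma eq_of_adj_of_mem_edgeSide (hT : T.IsAcyclic) (hcu : T.Adj c u) {x : V}
    (hx : x ∈ edgeSide T c u) (hcx : T.Adj c x) : x = u :=
  (eq_and_eq_of_adj_of_mem_edgeSide hx (notMem_edgeSide hT hcu) hcx.symm).1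

lemma degreeIn_edgeSide_le_one (hT : T.IsAcyclic) (hcu : T.Adj c u) :
    degreeIn T c (edgeSide T c u) ≤ 1 :=
  card_le_one.2 fun _ hx _ hy ↦
    (eq_of_adj_of_mem_edgeSide hT hcu (mem_filter.1 hx).1 (mem_filter.1 hx).2).trans
      (eq_of_adj_of_mem_edgeSide hT hcu (mem_filter.1 hy).1 (mem_filter.1 hy).2).symm

lemma edgeSide_ssubset (hT : T.IsAcyclic) {u' : V} (hcu : T.Adj c u) (huu' : T.Adj u u')
    (hne : u' ≠ c) : edgeSide T u u' ⊂ edgeSide T c u := by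
  refine (ssubset_iff_of_subset (edgeSide_subset ?_ fun x hx y hy hxy ↦ ?_)).2
    ⟨u, self_mem_edgeSide, notMem_edgeSide hT huu'⟩
  · by_contra h
    exact hne (eq_and_eq_of_adj_of_mem_edgeSide self_mem_edgeSide h huu').2
  · by_contra h
    obtain ⟨rfl, rfl⟩ := eq_and_eq_of_adj_of_mem_edgeSide hx h hxy
    exact hne (eq_of_adj_of_mem_edgeSide hT huu' hy hxy).symm

lemma exists_centroid (hT : T.IsTree) :
    ∃ c, ∀ u, T.Adj c u → 2 * #(edgeSide T c u) ≤ Fintype.card V := by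
  by_contra! hno
  obtain ⟨r⟩ := hT.connected.nonempty
  obtain ⟨e, he, hmin⟩ := exists_min_image
    ({e | T.Adj e.1 e.2 ∧ Fintype.card V < 2 * #(edgeSide T e.1 e.2)} : Finset (V × V))
    (fun e ↦ #(edgeSide T e.1 e.2)) ((hno r).imp' (fun u ↦ (r, u)) fun u hu ↦ by simpa using hu)
  obtain ⟨c, u⟩ := e
  obtain ⟨hcu, hbig⟩ : T.Adj c u ∧ Fintype.card V < 2 * #(edgeSide T c u) := by
    simpa using he
  obtain ⟨u', huu', hbig'⟩ := hno u
  have hle : #(edgeSide T c u) ≤ #(edgeSide T u u') :=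
    hmin (u, u') ((mem_filter_univ _).2 ⟨huu', hbig'⟩)
  obtain rfl | hne := eq_or_ne u' c
  · have hdisj : Disjoint (edgeSide T u' u) (edgeSide T u u') :=
      disjoint_edgeSide hT.isAcyclic hcu
    have := card_union_of_disjoint hdisj ▸ card_le_univ (edgeSide T u' u ∪ edgeSide T u u')
    omega
  · exact hle.not_gt (card_lt_card (edgeSide_ssubset hT.isAcyclic hcu huu' hne))

lemma IsBranchUnion.edgeSide_subset (hT : T.IsAcyclic) (hS : IsBranchUnion T c S)
    (hcu : T.Adj c u) (hu : u ∈ S) : edgeSide T c u ⊆ S := by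
  refine _root_.edgeSide_subset hu fun x hx y hy hxy ↦ ?_
  by_contra hyS
  obtain rfl := hS.eq_of_adj x hx y hyS hxy
  exact notMem_edgeSide hT hcu hy

lemma IsBranchUnion.sdiff_edgeSide (hS : IsBranchUnion T c S) :
    IsBranchUnion T c (S \ edgeSide T c u) := by
  refine ⟨fun h ↦ hS.notMem (mem_sdiff.1 h).1, fun x hx y hy hxy ↦ ?_⟩
  obtain ⟨hxS, hxB⟩ := mem_sdiff.1 hx
  by_cases hyS : y ∈ S
  · have hyB : y ∈ edgeSide T c u := by simpa [hyS] using hy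
    obtain ⟨-, rfl⟩ := eq_and_eq_of_adj_of_mem_edgeSide hyB hxB hxy.symm
    exact absurd hxS hS.notMem
  · exact hS.eq_of_adj x hxS y hyS hxy

/-- Take `S` minimal subject to the two conditions on its complement. -/
lemma exists_isBranchUnion (hT : T.IsTree)
    (hc : ∀ u, T.Adj c u → 2 * #(edgeSide T c u) ≤ Fintype.card V) {a b i j : ℕ} (ha : a ≤ i)
    (hb : b ≤ j) (hab : Fintype.card V ≤ a + b + 1)
    (hij : 3 * Fintype.card V ≤ 2 * (i + j + 2)) :
    ∃ S, IsBranchUnion T c S ∧ #S ≤ j ∧ degreeIn T c S ≤ b ∧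
      #Sᶜ ≤ i + 1 ∧ degreeIn T c Sᶜ ≤ a := by
  obtain ⟨S, hS, hmin⟩ := exists_min_image
    ({S | IsBranchUnion T c S ∧ #Sᶜ ≤ i + 1 ∧ degreeIn T c Sᶜ ≤ a} : Finset (Finset V)) card
    ⟨{c}ᶜ, by
      rw [mem_filter_univ, compl_compl]
      exact ⟨⟨by simp, by simp⟩, by simp, by simp [degreeIn, filter_singleton]⟩⟩
  obtain ⟨hS, hSi, hSa⟩ := (mem_filter_univ S).1 hS
  refine ⟨S, hS, ?_⟩
  have hcard := S.card_add_card_compl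
  by_cases htight : degreeIn T c Sᶜ = a
  · have h₁ : degreeIn T c Sᶜ + 1 ≤ #Sᶜ := by
      rw [← degreeIn_add_compl_add_one (G := T) (mem_compl.2 hS.notMem)]
      omega
    have h₂ : degreeIn T c S ≤ #S := degreeIn_le_card
    omega
  obtain rfl | hne := S.eq_empty_or_nonempty
  · exact ⟨by simp, by simp [degreeIn], hSi, hSa⟩
  obtain ⟨u, hu, hcu⟩ := hS.exists_adj hT.connected hne
  have hsub := hS.edgeSide_subset hT.isAcyclic hcu hu
  have hone := degreeIn_edgeSide_le_one hT.isAcyclic hcu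
  have hdeg : degreeIn T c (S \ edgeSide T c u)ᶜ ≤ degreeIn T c Sᶜ + 1 := by
    have : (S \ edgeSide T c u)ᶜ = Sᶜ ∪ edgeSide T c u := by ext; simp [imp_iff_not_or]
    rw [this]
    exact degreeIn_union_le.trans (Nat.add_le_add_left hone _)
  have hlt : #(S \ edgeSide T c u) < #S :=
    card_lt_card (sdiff_ssubset hsub ⟨u, self_mem_edgeSide⟩)
  have hbig : ¬ #(S \ edgeSide T c u)ᶜ ≤ i + 1 := fun h ↦ hlt.not_ge <| hmin _ <|
    (mem_filter_univ _).2 ⟨hS.sdiff_edgeSide, h, by omega⟩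
  have h₁ := degreeIn_sdiff_add (G := T) (w := c) hsub
  have h₂ : degreeIn T c (S \ edgeSide T c u) ≤ #(S \ edgeSide T c u) := degreeIn_le_card
  have h₃ := card_sdiff_add_card_eq_card hsub
  have h₄ := (S \ edgeSide T c u).card_add_card_compl
  have h₅ := hc u hcu
  omega

lemma contains_of_card_le_degreeIn_union (hT : T.IsTree) {H : SimpleGraph W} {I J : Finset W}
    (hI : H.IsClique ↑I) (hJ : H.IsClique ↑J) (hIJ : Disjoint I J)
    (hcard : 3 * Fintype.card V ≤ 2 * (#I + #J)) {w : W}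
    (hw : Fintype.card V ≤ degreeIn H w (I ∪ J) + 1) : Contains H T := by
  obtain ⟨c, hc⟩ := exists_centroid hT
  rw [degreeIn_union hIJ, ← degreeIn_erase_self (S := I), ← degreeIn_erase_self (S := J)] at hw
  have hi := pred_card_le_card_erase (s := I) (a := w)
  have hj := pred_card_le_card_erase (s := J) (a := w)
  obtain ⟨S, hS, hSj, hSb, hSi, hSa⟩ := exists_isBranchUnion hT hc degreeIn_le_card
    degreeIn_le_card hw (by omega : _ ≤ 2 * (#(I.erase w) + #(J.erase w) + 2))
  refine hS.contains (notMem_erase w J) (notMem_erase w I)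
    (hIJ.symm.mono (erase_subset _ _) (erase_subset _ _))
    (.inl (hJ.subset (coe_subset.2 (erase_subset _ _))))
    (hI.subset (coe_subset.2 (erase_subset _ _)))
    hSj hSb ?_ hSa
  rw [card_erase_of_mem (mem_compl.2 hS.notMem)]
  omega

end Branch

/-- The leaves of `T`. -/
def leaves [Fintype V] (T : SimpleGraph V) : Finset V :=
  {v | T.degree v = 1}

/-- The vertices of `T` adjacent to a leaf. -/
def supportVertices [Fintype V] (T : SimpleGraph V) : Finset V :=
  {v | ∃ l ∈ leaves T, T.Adj v l}

/-- The vertices of `T` with a neighbour in `Q`. -/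
def nbhd [Fintype V] (T : SimpleGraph V) (Q : Finset V) : Finset V :=
  {v | ∃ q ∈ Q, T.Adj q v}

/-- `Q` consists of vertices of degree two, at distance at least two from all support vertices and
at distance at least three from each other. -/
structure IsSpread [Fintype V] (T : SimpleGraph V) (Q : Finset V) : Prop where
  degree_eq_two : ∀ q ∈ Q, T.degree q = 2
  notMem_supportVertices : ∀ q ∈ Q, q ∉ supportVertices T
  not_adj_supportVertex : ∀ q ∈ Q, ∀ x ∈ supportVertices T, ¬ T.Adj q x
  not_adj : ∀ q ∈ Q, ∀ q' ∈ Q, ¬ T.Adj q q'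
  eq_of_adj : ∀ q ∈ Q, ∀ q' ∈ Q, ∀ x, T.Adj q x → T.Adj q' x → q = q'

section Leaves

variable [Fintype V] {T : SimpleGraph V} {F Q : Finset V} {l u v x : V}

lemma mem_leaves : v ∈ leaves T ↔ T.degree v = 1 := by
  simp [leaves]

lemma mem_supportVertices : v ∈ supportVertices T ↔ ∃ l ∈ leaves T, T.Adj v l := by
  simp [supportVertices]

lemma mem_nbhd : v ∈ nbhd T Q ↔ ∃ q ∈ Q, T.Adj q v := by
  simp [nbhd]

lemma nbhd_insert : nbhd T (insert v Q) = T.neighborFinset v ∪ nbhd T Q := by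
  ext x
  simp [mem_nbhd]

lemma eq_of_adj_of_mem_leaves (hl : l ∈ leaves T) (hu : T.Adj l u) (hv : T.Adj l v) : u = v :=
  (SimpleGraph.degree_eq_one_iff_existsUnique_adj.1 (mem_leaves.1 hl)).unique hu hv

lemma not_adj_of_mem_leaves (hT : T.Connected) (hcard : 3 ≤ Fintype.card V) {l l' : V}
    (hl : l ∈ leaves T) (hl' : l' ∈ leaves T) : ¬ T.Adj l l' := by
  intro hadj
  obtain ⟨x, hx⟩ : ∃ x, x ∉ ({l, l'} : Finset V) := by
    by_contra! h
    have := card_le_card fun x (_ : x ∈ univ) ↦ h x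
    have := card_le_two (a := l) (b := l')
    rw [card_univ] at *
    omega
  obtain ⟨p⟩ := hT.preconnected l x
  obtain ⟨d, -, hfst, hsnd⟩ := p.exists_boundary_dart ({l, l'} : Finset V) (by simp) hx
  refine hsnd ?_
  have hd := d.adj
  obtain h | h := mem_insert.1 hfst
  · exact eq_of_adj_of_mem_leaves hl hadj (h ▸ hd) ▸ by simp
  · rw [mem_singleton] at h
    exact eq_of_adj_of_mem_leaves hl' hadj.symm (h ▸ hd) ▸ by simp

lemma disjoint_leaves_supportVertices (hT : T.Connected) (hcard : 3 ≤ Fintype.card V) :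
    Disjoint (leaves T) (supportVertices T) :=
  disjoint_left.2 fun _ hv hv' ↦
    have ⟨_, hl, hvl⟩ := mem_supportVertices.1 hv'
    not_adj_of_mem_leaves hT hcard hv hl hvl

lemma card_eq_sum_degreeIn_supportVertices (hF : F ⊆ leaves T) :
    #F = ∑ u ∈ supportVertices T, degreeIn T u F := by
  rw [sum_degreeIn_comm, card_eq_sum_ones]
  refine sum_congr rfl fun l hl ↦ ?_
  obtain ⟨u, hlu, huniq⟩ :=
    SimpleGraph.degree_eq_one_iff_existsUnique_adj.1 (mem_leaves.1 (hF hl))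
  refine (card_eq_one.2 ⟨u, ?_⟩).symm
  ext x
  rw [mem_filter, mem_singleton]
  refine ⟨fun h ↦ huniq x h.2, ?_⟩
  rintro rfl
  exact ⟨mem_supportVertices.2 ⟨l, hF hl, hlu.symm⟩, hlu⟩

lemma exists_subset_leaves_degreeIn_eq (b : V → ℕ) (hb : ∀ u, b u ≤ degreeIn T u (leaves T)) :
    ∃ F ⊆ leaves T, ∀ u, degreeIn T u F = b u := by
  choose S hS hSb using fun u ↦ exists_subset_card_eq (hb u)
  refine ⟨univ.biUnion S, biUnion_subset.2 fun u _ ↦ (hS u).trans (filter_subset _ _),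
    fun u ↦ ?_⟩
  rw [← hSb, degreeIn]
  congr 1
  ext l
  simp only [mem_filter, mem_biUnion, mem_univ, true_and]
  constructor
  · rintro ⟨⟨u', hl⟩, hul⟩
    have hl' := mem_filter.1 (hS u' hl)
    exact eq_of_adj_of_mem_leaves hl'.1 hul.symm hl'.2.symm ▸ hl
  · exact fun hl ↦ ⟨⟨u, hl⟩, (mem_filter.1 (hS u hl)).2⟩

lemma sum_degree_add_two (hT : T.IsTree) : ∑ v, T.degree v + 2 = 2 * Fintype.card V := by
  rw [T.sum_degrees_eq_twice_card_edges, ← hT.card_edgeFinset, mul_add]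

lemma IsSpread.disjoint_leaves (hQ : IsSpread T Q) : Disjoint (leaves T) Q :=
  disjoint_left.2 fun v hv hvQ ↦ by
    have := mem_leaves.1 hv
    have := hQ.degree_eq_two v hvQ
    omega

lemma IsSpread.disjoint_nbhd (hQ : IsSpread T Q) :
    Disjoint (leaves T ∪ supportVertices T ∪ Q) (nbhd T Q) := by
  refine disjoint_right.2 fun v hv hv' ↦ ?_
  obtain ⟨q, hq, hqv⟩ := mem_nbhd.1 hv
  obtain hv' | hv' := mem_union.1 hv'
  · obtain hv' | hv' := mem_union.1 hv'
    · exact hQ.notMem_supportVertices q hq (mem_supportVertices.2 ⟨v, hv', hqv⟩)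
    · exact hQ.not_adj_supportVertex q hq v hv' hqv
  · exact hQ.not_adj q hq v hv' hqv

lemma card_nbhd_le (hQ : ∀ q ∈ Q, T.degree q ≤ 2) : #(nbhd T Q) ≤ 2 * #Q := by
  have hsub : nbhd T Q ⊆ Q.biUnion fun q ↦ T.neighborFinset q := fun v hv ↦ by
    simpa [mem_nbhd] using hv
  rw [mul_comm]
  exact (card_le_card hsub).trans (card_biUnion_le_card_mul _ _ 2 hQ)

lemma IsSpread.insert (hQ : IsSpread T Q) (hdeg : T.degree v = 2) (hv : v ∉ supportVertices T)
    (hvQ : v ∉ nbhd T Q) (hnone : degreeIn T v (supportVertices T ∪ nbhd T Q) = 0) :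
    IsSpread T (insert v Q) := by
  have hnone : ∀ x ∈ supportVertices T ∪ nbhd T Q, ¬ T.Adj v x := fun x hx hvx ↦
    hnone.not_gt (degreeIn_pos_iff.2 ⟨x, hx, hvx⟩)
  have hnadj : ∀ q ∈ Q, ¬ T.Adj q v := fun q hq h ↦ hvQ (mem_nbhd.2 ⟨q, hq, h⟩)
  have hcommon : ∀ q ∈ Q, ∀ x, T.Adj q x → ¬ T.Adj v x := fun q hq x hqx ↦
    hnone x (mem_union_right _ (mem_nbhd.2 ⟨q, hq, hqx⟩))
  constructor <;> simp only [forall_mem_insert]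
  · exact ⟨hdeg, hQ.degree_eq_two⟩
  · exact ⟨hv, hQ.notMem_supportVertices⟩
  · exact ⟨fun x hx ↦ hnone x (mem_union_left _ hx), hQ.not_adj_supportVertex⟩
  · exact ⟨⟨T.irrefl, fun q hq h ↦ hnadj q hq h.symm⟩, fun q hq ↦ ⟨hnadj q hq, hQ.not_adj q hq⟩⟩
  · exact ⟨⟨fun _ _ _ ↦ trivial, fun q hq x hvx hqx ↦ absurd hvx (hcommon q hq x hqx)⟩,
      fun q hq ↦ ⟨fun x hqx hvx ↦ absurd hvx (hcommon q hq x hqx), hQ.eq_of_adj q hq⟩⟩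

lemma IsSpread.three_le_degree_add (hT : T.IsTree) (hcard : 3 ≤ Fintype.card V)
    (hQ : IsSpread T Q) (hmax : ∀ Q', IsSpread T Q' → #Q' ≤ #Q)
    (hv : v ∉ leaves T ∪ supportVertices T ∪ Q ∪ nbhd T Q) :
    3 ≤ T.degree v + degreeIn T v (supportVertices T ∪ nbhd T Q) := by
  have : Nontrivial V := Fintype.one_lt_card_iff_nontrivial.1 (by omega)
  simp only [mem_union, not_or] at hv
  have hpos : 0 < T.degree v := hT.connected.preconnected.degree_pos_of_nontrivial v
  have hone : T.degree v ≠ 1 := fun h ↦ hv.1.1.1 (mem_leaves.2 h)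
  by_contra! hlt
  have := hmax _ (hQ.insert (by omega : T.degree v = 2) hv.1.1.2 hv.2 (by omega))
  rw [card_insert_of_notMem hv.1.2] at this
  omega

lemma card_leaves_add_sum_degreeIn_le {U : Finset V} (hU : Disjoint (leaves T) U) :
    #(leaves T) + ∑ v ∈ supportVertices T, degreeIn T v U ≤
      ∑ v ∈ supportVertices T, T.degree v := by
  rw [card_eq_sum_degreeIn_supportVertices subset_rfl, ← sum_add_distrib]
  refine sum_le_sum fun v _ ↦ ?_
  rw [← degreeIn_union hU]
  exact degreeIn_le_degree

lemma card_nbhd_add_sum_degreeIn_le {U : Finset V} (hU : Disjoint Q U) :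
    #(nbhd T Q) + ∑ v ∈ nbhd T Q, degreeIn T v U ≤ ∑ v ∈ nbhd T Q, T.degree v := by
  rw [card_eq_sum_ones, ← sum_add_distrib]
  refine sum_le_sum fun v hv ↦ ?_
  obtain ⟨q, hq, hqv⟩ := mem_nbhd.1 hv
  have hone : 1 ≤ degreeIn T v Q := degreeIn_pos_iff.2 ⟨q, hq, hqv.symm⟩
  refine (Nat.add_le_add_right hone _).trans ?_
  rw [← degreeIn_union hU]
  exact degreeIn_le_degree

/-- Double count the edges between the support vertices and the neighbours of a maximal `Q` on one
side, and the vertices far from the leaves and from `Q` on the other. -/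
lemma exists_isSpread_card_add_two_le (hT : T.IsTree) (hcard : 3 ≤ Fintype.card V) :
    ∃ Q, IsSpread T Q ∧
      Fintype.card V + 2 ≤ #(leaves T) + 3 * #(supportVertices T) + 5 * #Q := by
  obtain ⟨Q, hQ, hmax⟩ := exists_max_image ({Q | IsSpread T Q} : Finset (Finset V)) card
    ⟨∅, by rw [mem_filter_univ]; constructor <;> simp⟩
  rw [mem_filter_univ] at hQ
  replace hmax : ∀ Q', IsSpread T Q' → #Q' ≤ #Q := fun Q' h ↦ hmax Q' ((mem_filter_univ _).2 h)
  refine ⟨Q, hQ, ?_⟩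
  obtain ⟨U, hU⟩ : ∃ U, U = (leaves T ∪ supportVertices T ∪ Q ∪ nbhd T Q)ᶜ := ⟨_, rfl⟩
  have hLPQ : Disjoint (leaves T ∪ supportVertices T) Q :=
    disjoint_union_left.2 ⟨hQ.disjoint_leaves, disjoint_right.2 hQ.notMem_supportVertices⟩
  have hsplit (f : V → ℕ) : ∑ v, f v = ∑ v ∈ leaves T, f v + ∑ v ∈ supportVertices T, f v +
      ∑ v ∈ Q, f v + ∑ v ∈ nbhd T Q, f v + ∑ v ∈ U, f v := by
    rw [← union_compl (leaves T ∪ supportVertices T ∪ Q ∪ nbhd T Q),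
      sum_union disjoint_compl_right, sum_union hQ.disjoint_nbhd, sum_union hLPQ,
      sum_union (disjoint_leaves_supportVertices hT.connected hcard), hU]
  have hn := hsplit fun _ ↦ 1
  have hdeg := hsplit fun v ↦ T.degree v
  have hdegL : ∑ v ∈ leaves T, T.degree v = #(leaves T) := by
    rw [sum_congr rfl fun v hv ↦ mem_leaves.1 hv, card_eq_sum_ones]
  have hdegQ : ∑ v ∈ Q, T.degree v = #Q * 2 := sum_const_nat hQ.degree_eq_two
  have hdegU : #U • 3 ≤
      ∑ v ∈ U, (T.degree v + degreeIn T v (supportVertices T ∪ nbhd T Q)) :=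
    card_nsmul_le_sum _ _ _ fun v hv ↦
      hQ.three_le_degree_add hT hcard hmax (mem_compl.1 (hU ▸ hv))
  rw [sum_add_distrib, sum_degreeIn_comm, sum_union (hQ.disjoint_nbhd.mono_left
    (subset_union_right.trans subset_union_left)), smul_eq_mul] at hdegU
  simp only [sum_const, smul_eq_mul, mul_one, card_univ] at hn
  have hLU : Disjoint (leaves T) U := hU ▸ disjoint_compl_right.mono_left
    (subset_union_left.trans (subset_union_left.trans subset_union_left))
  have hQU : Disjoint Q U := hU ▸ disjoint_compl_right.mono_left
    (subset_union_right.trans subset_union_left)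
  have := card_leaves_add_sum_degreeIn_le hLU
  have := card_nbhd_add_sum_degreeIn_le (T := T) hQU
  have := card_nbhd_le fun q hq ↦ (hQ.degree_eq_two q hq).le
  have := sum_degree_add_two hT
  omega

end Leaves

/-- `L` consists of leaves at `u₁`, and `F` of leaves at other vertices, at most two at each vertex,
and of vertices of degree two sharing no neighbour with the rest of the family. -/
structure IsPendantFamily [Fintype V] (T : SimpleGraph V) (u₁ : V) (L F : Finset V) : Prop where
  neighborFinset_eq : ∀ l ∈ L, T.neighborFinset l = {u₁}
  disjoint : Disjoint L F
  isIndepSet : T.IsIndepSet ↑(L ∪ F)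
  leaf_or_degree_two : ∀ f ∈ F,
    (∃ u, u ≠ u₁ ∧ T.neighborFinset f = {u} ∧ degreeIn T u F ≤ 2) ∨
    (∃ u u', u ≠ u' ∧ T.neighborFinset f = {u, u'} ∧
      ∀ g ∈ L ∪ F, ∀ x, T.Adj f x → T.Adj g x → g = f)

lemma exists_add_eq_card_and_sum_min_eq {P : Finset V} {d : V → ℕ} {a : ℕ}
    (hd : ∀ u ∈ P, 1 ≤ d u) (ha : ∀ u ∈ P, d u ≤ a) :
    ∃ p s, p + s = #P ∧ ∑ u ∈ P, min 2 (d u) = 2 * p + s ∧ ∑ u ∈ P, d u ≤ a * p + s := by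
  induction P using Finset.induction_on with
  | empty => exact ⟨0, 0, by simp⟩
  | insert u P hu ih =>
    rw [forall_mem_insert] at hd ha
    obtain ⟨p, s, hcard, hmin, hsum⟩ := ih hd.2 ha.2
    simp only [card_insert_of_notMem hu, sum_insert hu]
    obtain h | h := hd.1.eq_or_lt
    · exact ⟨p, s + 1, by omega, by omega, by omega⟩
    · have := ha.1
      exact ⟨p + 1, s, by omega, by omega, by rw [mul_add]; omega⟩

lemma two_mul_le_of_sq_add_le {k n a p s x : ℕ} (hk : 8 ≤ k) (hn : k ^ 2 + k + 1 ≤ n)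
    (ha : 1 ≤ a) (h : n ≤ a * (p + 1) + 3 * p + 1 + 4 * s + 5 * x) :
    2 * k ≤ a + 2 * p + s + x := by
  by_contra! hlt
  have hle := hn.trans h
  zify at *
  have : (k : ℤ) ^ 2 + k + 1 ≤ 10 * k - 32 + (a - 7) * (p - 4) := by nlinarith
  rcases le_total (7 : ℤ) a with h7 | h7 <;> rcases le_total (4 : ℤ) p with h4 | h4
  · nlinarith [sq_nonneg (((a : ℤ) - 7) - 2 * (p - 4)), sq_nonneg ((k : ℤ) - 8)]
  · nlinarith [mul_nonneg (sub_nonneg.2 h7) (sub_nonneg.2 h4)]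
  · nlinarith [mul_nonneg (sub_nonneg.2 h7) (sub_nonneg.2 h4)]
  · have : (7 - (a : ℤ)) * (4 - p) ≤ 24 := by nlinarith
    nlinarith

section PendantFamily

variable [Fintype V] {T : SimpleGraph V} {F Q : Finset V} {u₁ : V}

lemma IsSpread.isIndepSet_leaves_union (hQ : IsSpread T Q) (hT : T.Connected)
    (hcard : 3 ≤ Fintype.card V) : T.IsIndepSet ↑(leaves T ∪ Q) := by
  intro f hf g hg _ hfg
  obtain hf | hf := mem_union.1 hf <;> obtain hg | hg := mem_union.1 hg
  · exact not_adj_of_mem_leaves hT hcard hf hg hfg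
  · exact hQ.notMem_supportVertices g hg (mem_supportVertices.2 ⟨f, hf, hfg.symm⟩)
  · exact hQ.notMem_supportVertices f hf (mem_supportVertices.2 ⟨g, hg, hfg⟩)
  · exact hQ.not_adj f hf g hg hfg

lemma IsSpread.eq_of_adj_of_mem_leaves_union (hQ : IsSpread T Q) {f g x : V} (hf : f ∈ Q)
    (hg : g ∈ leaves T ∪ Q) (hfx : T.Adj f x) (hgx : T.Adj g x) : g = f := by
  obtain hg | hg := mem_union.1 hg
  · exact absurd hfx (hQ.not_adj_supportVertex f hf x (mem_supportVertices.2 ⟨g, hg, hgx.symm⟩))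
  · exact hQ.eq_of_adj g hg f hf x hgx hfx

lemma IsSpread.isPendantFamily (hQ : IsSpread T Q) (hT : T.Connected)
    (hcard : 3 ≤ Fintype.card V) (hF : F ⊆ leaves T) (hF₁ : degreeIn T u₁ F = 0)
    (hF₂ : ∀ u, degreeIn T u F ≤ 2) :
    IsPendantFamily T u₁ {l ∈ leaves T | T.Adj u₁ l} (F ∪ Q) := by
  have hF₁ : ∀ f ∈ F, ¬ T.Adj u₁ f := fun f hf h ↦ hF₁.not_gt (degreeIn_pos_iff.2 ⟨f, hf, h⟩)
  have hL : ({l ∈ leaves T | T.Adj u₁ l} : Finset V) ∪ (F ∪ Q) ⊆ leaves T ∪ Q := by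
    rw [← union_assoc]
    exact union_subset_union_left (union_subset (filter_subset _ _) hF)
  refine ⟨fun l hl ↦ ?_, ?_, (hQ.isIndepSet_leaves_union hT hcard).mono (mod_cast hL), ?_⟩
  · rw [mem_filter] at hl
    obtain ⟨u, hu⟩ := card_eq_one.1 (mem_leaves.1 hl.1)
    have : u₁ ∈ ({u} : Finset V) := hu ▸ (T.mem_neighborFinset l u₁).2 hl.2.symm
    rw [hu, mem_singleton.1 this]
  · refine disjoint_union_right.2 ⟨disjoint_left.2 fun l hl hlF ↦ ?_,
      hQ.disjoint_leaves.mono_left (filter_subset _ _)⟩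
    exact hF₁ l hlF (mem_filter.1 hl).2
  · intro f hf
    obtain hf | hf := mem_union.1 hf
    · obtain ⟨u, hu⟩ := card_eq_one.1 (mem_leaves.1 (hF hf))
      have hfu : T.Adj f u := (T.mem_neighborFinset f u).1 (hu ▸ mem_singleton_self u)
      refine .inl ⟨u, ?_, hu, ?_⟩
      · rintro rfl
        exact hF₁ f hf hfu.symm
      · have hzero : degreeIn T u Q = 0 := Nat.eq_zero_of_not_pos fun h ↦
          have ⟨q, hq, huq⟩ := degreeIn_pos_iff.1 h
          hQ.not_adj_supportVertex q hq u (mem_supportVertices.2 ⟨f, hF hf, hfu.symm⟩) huq.symm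
        exact degreeIn_union_le.trans (hzero ▸ hF₂ u)
    · obtain ⟨u, u', hne, hu⟩ := card_eq_two.1 (hQ.degree_eq_two f hf)
      exact .inr ⟨u, u', hne, hu, fun g hg x ↦ hQ.eq_of_adj_of_mem_leaves_union hf (hL hg)⟩

lemma exists_isPendantFamily {k : ℕ} (hT : T.IsTree) (hk : 8 ≤ k)
    (hn : k ^ 2 + k + 1 ≤ Fintype.card V) :
    ∃ u₁ L F, IsPendantFamily T u₁ L F ∧ 2 * k ≤ #L + #F ∧ (3 * k ≤ #L ∨ 2 ≤ #F) := by
  have hcard : 3 ≤ Fintype.card V := by nlinarith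
  have : Nontrivial V := Fintype.one_lt_card_iff_nontrivial.1 (by omega)
  obtain ⟨Q, hQ, hcount⟩ := exists_isSpread_card_add_two_le hT hcard
  have hpos : ∀ u ∈ supportVertices T, 1 ≤ degreeIn T u (leaves T) := fun u hu ↦
    degreeIn_pos_iff.2 (mem_supportVertices.1 hu)
  have hne : (supportVertices T).Nonempty := by
    obtain ⟨l, hl⟩ := hT.exists_vert_degree_one_of_nontrivial
    obtain ⟨u, hu⟩ := (T.degree_pos_iff_exists_adj l).1 (by omega)
    exact ⟨u, mem_supportVertices.2 ⟨l, mem_leaves.2 hl, hu.symm⟩⟩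
  obtain ⟨u₁, hu₁, hmax⟩ := exists_max_image _ (fun u ↦ degreeIn T u (leaves T)) hne
  obtain ⟨F, hF, hdeg⟩ := exists_subset_leaves_degreeIn_eq (T := T)
    (fun u ↦ if u = u₁ then 0 else min 2 (degreeIn T u (leaves T)))
    fun u ↦ by split_ifs <;> omega
  refine ⟨u₁, _, F ∪ Q, hQ.isPendantFamily hT.connected hcard hF (by simp [hdeg]) fun u ↦ ?_, ?_⟩
  · rw [hdeg]
    split_ifs <;> omega
  have hcardL := card_eq_sum_degreeIn_supportVertices (T := T) subset_rfl
  have hcardF := card_eq_sum_degreeIn_supportVertices hF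
  have hcardFQ := card_union_of_disjoint (hQ.disjoint_leaves.mono_left hF)
  have hcardP := card_erase_add_one hu₁
  rw [← add_sum_erase _ _ hu₁] at hcardL hcardF
  rw [hdeg, if_pos rfl, zero_add,
    sum_congr rfl fun u hu ↦ (hdeg u).trans (if_neg (ne_of_mem_erase hu))] at hcardF
  obtain ⟨p, s, hps, hmin, hsum⟩ := exists_add_eq_card_and_sum_min_eq
    (P := (supportVertices T).erase u₁) (fun u hu ↦ hpos u (mem_of_mem_erase hu))
    fun u hu ↦ hmax u (mem_of_mem_erase hu)
  have hbound : Fintype.card V ≤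
      degreeIn T u₁ (leaves T) * (p + 1) + 3 * p + 1 + 4 * s + 5 * #Q := by
    rw [mul_add]
    omega
  have hsize := two_mul_le_of_sq_add_le hk hn (hpos u₁ hu₁) hbound
  change 2 * k ≤ degreeIn T u₁ (leaves T) + _ ∧ (3 * k ≤ degreeIn T u₁ (leaves T) ∨ _)
  refine ⟨by omega, or_iff_not_imp_right.2 fun hlt ↦ ?_⟩
  obtain rfl : p = 0 := by omega
  nlinarith

lemma IsPendantFamily.degree_le_two {L : Finset V} (hF : IsPendantFamily T u₁ L F) {f : V}
    (hf : f ∈ L ∪ F) : T.degree f ≤ 2 := by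
  rw [← SimpleGraph.card_neighborFinset_eq_degree]
  obtain hf | hf := mem_union.1 hf
  · simp [hF.neighborFinset_eq f hf]
  · obtain ⟨u, -, hu, -⟩ | ⟨u, u', -, hu, -⟩ := hF.leaf_or_degree_two f hf
    · simp [hu]
    · exact hu ▸ card_le_two

end PendantFamily

/-- `φ` embeds `Q` into `R` and `B` into `I`; the set `B` contains all neighbours of `Q`, and the
edges between `Q` and `B` are mapped to edges of `H`. -/
structure IsPartialEmbedding (T : SimpleGraph V) (H : SimpleGraph W) (R I : Finset W)
    (Q B : Finset V) (φ : V → W) : Prop where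
  disjoint : Disjoint Q B
  injOn_left : Set.InjOn φ Q
  injOn_right : Set.InjOn φ B
  left_mem : ∀ q ∈ Q, φ q ∈ R
  right_mem : ∀ x ∈ B, φ x ∈ I
  mem_of_adj : ∀ q ∈ Q, ∀ x, T.Adj q x → x ∈ B
  map_adj : ∀ q ∈ Q, ∀ x, T.Adj q x → H.Adj (φ q) (φ x)

section PartialEmbedding

variable {T : SimpleGraph V} {H : SimpleGraph W} {I R : Finset W} {B L Q F : Finset V} {φ : V → W}
  {f u u' u₁ : V} {a z : W}

lemma injOn_update_insert {A : Finset V} (h : Set.InjOn φ A) (hz : ∀ x ∈ A, x ≠ u → φ x ≠ z) :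
    Set.InjOn (Function.update φ u z) ↑(insert u A) := by
  intro x hx y hy hxy
  obtain rfl | hxu := eq_or_ne x u <;> obtain rfl | hyu := eq_or_ne y x
  · rfl
  · rw [Function.update_self, Function.update_of_ne hyu] at hxy
    exact absurd hxy.symm (hz y (mem_of_mem_insert_of_ne hy hyu) hyu)
  · rfl
  · obtain rfl | hyu := eq_or_ne y u
    · rw [Function.update_self, Function.update_of_ne hxu] at hxy
      exact absurd hxy (hz x (mem_of_mem_insert_of_ne hx hxu) hxu)
    · rw [Function.update_of_ne hxu, Function.update_of_ne hyu] at hxy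
      exact h (mem_of_mem_insert_of_ne hx hxu) (mem_of_mem_insert_of_ne hy hyu) hxy

namespace IsPartialEmbedding

lemma update_right (h : IsPartialEmbedding T H R I Q B φ) (hu : u ∉ Q) (ha : a ∈ I)
    (hne : ∀ x ∈ B, x ≠ u → φ x ≠ a) (hadj : ∀ q ∈ Q, T.Adj q u → H.Adj (φ q) a) :
    IsPartialEmbedding T H R I Q (insert u B) (Function.update φ u a) := by
  have hQ : ∀ q ∈ Q, Function.update φ u a q = φ q := fun q hq ↦
    Function.update_of_ne (ne_of_mem_of_not_mem hq hu) _ _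
  refine ⟨disjoint_insert_right.2 ⟨hu, h.disjoint⟩, h.injOn_left.congr fun q hq ↦ (hQ q hq).symm,
    injOn_update_insert h.injOn_right hne, fun q hq ↦ hQ q hq ▸ h.left_mem q hq, fun x hx ↦ ?_,
    fun q hq x hqx ↦ mem_insert_of_mem (h.mem_of_adj q hq x hqx), fun q hq x hqx ↦ ?_⟩
  · obtain rfl | hxu := eq_or_ne x u
    · rwa [Function.update_self]
    · exact Function.update_of_ne hxu a φ ▸ h.right_mem x (mem_of_mem_insert_of_ne hx hxu)
  · rw [hQ q hq]
    obtain rfl | hxu := eq_or_ne x u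
    · rw [Function.update_self]
      exact hadj q hq hqx
    · exact Function.update_of_ne hxu a φ ▸ h.map_adj q hq x hqx

lemma update_left (h : IsPartialEmbedding T H R I Q B φ) (hf : f ∉ B) (hz : z ∈ R)
    (hne : ∀ q ∈ Q, φ q ≠ z) (hadj : ∀ x, T.Adj f x → x ∈ B ∧ H.Adj z (φ x)) :
    IsPartialEmbedding T H R I (insert f Q) B (Function.update φ f z) := by
  have hB : ∀ x ∈ B, Function.update φ f z x = φ x := fun x hx ↦
    Function.update_of_ne (ne_of_mem_of_not_mem hx hf) _ _
  have hmem : ∀ q ∈ insert f Q, ∀ x, T.Adj q x → x ∈ B :=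
    forall_mem_insert _ _ _ |>.2 ⟨fun x hfx ↦ (hadj x hfx).1, h.mem_of_adj⟩
  refine ⟨disjoint_insert_left.2 ⟨hf, h.disjoint⟩,
    injOn_update_insert h.injOn_left fun q hq _ ↦ hne q hq,
    h.injOn_right.congr fun x hx ↦ (hB x hx).symm, fun q hq ↦ ?_,
    fun x hx ↦ hB x hx ▸ h.right_mem x hx, hmem, fun q hq x hqx ↦ ?_⟩
  · obtain rfl | hqf := eq_or_ne q f
    · rwa [Function.update_self]
    · exact Function.update_of_ne hqf z φ ▸ h.left_mem q (mem_of_mem_insert_of_ne hq hqf)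
  · rw [hB x (hmem q hq x hqx)]
    obtain rfl | hqf := eq_or_ne q f
    · rw [Function.update_self]
      exact (hadj x hqx).2
    · exact Function.update_of_ne hqf z φ ▸ h.map_adj q (mem_of_mem_insert_of_ne hq hqf) x hqx

lemma contains [Fintype V] (h : IsPartialEmbedding T H R I Q B φ) (hI : H.IsClique ↑I)
    (hRI : Disjoint R I) (hcard : Fintype.card V ≤ #I + #Q) : Contains H T := by
  obtain ⟨g, hg, hgI, hgφ⟩ := exists_injOn_eqOn h.injOn_right h.right_mem
    (S := Qᶜ) (subset_compl_comm.1 (subset_compl_iff_disjoint_right.2 h.disjoint))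
    (by rw [card_compl]; omega)
  have hQ : EmbedsOn T H φ Q := ⟨h.injOn_left, fun x hx y hy hxy ↦
    absurd (h.mem_of_adj x hx y hxy) (disjoint_left.1 h.disjoint hy)⟩
  refine EmbedsOn.contains (union_compl Q ▸ hQ.union (embedsOn_of_isClique hI hg hgI)
    disjoint_compl_right (fun q hq x hx he ↦ ?_) fun q hq x _ hqx ↦ ?_)
  · exact disjoint_left.1 hRI (h.left_mem q hq) (he ▸ hgI x hx)
  · exact hgφ x (h.mem_of_adj q hq x hqx) ▸ h.map_adj q hq x hqx

variable [Fintype V]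

lemma update_nbhd_insert
    (h : IsPartialEmbedding T H R I Q (T.neighborFinset f ∪ nbhd T Q) φ) (hfQ : f ∉ nbhd T Q)
    (hz : z ∈ R) (hne : ∀ q ∈ Q, φ q ≠ z) (hadj : ∀ x, T.Adj f x → H.Adj z (φ x)) :
    IsPartialEmbedding T H R I (insert f Q) (nbhd T (insert f Q)) (Function.update φ f z) := by
  rw [nbhd_insert]
  refine h.update_left ?_ hz hne fun x hx ↦
    ⟨mem_union_left _ ((T.mem_neighborFinset f x).2 hx), hadj x hx⟩
  simp [hfQ]

/-- The neighbour `u` of `f` may have been mapped before; it is then moved to `a`. -/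
lemma exists_insert_of_neighborFinset_eq_singleton
    (h : IsPartialEmbedding T H R I Q (nbhd T Q) φ) (hf : T.neighborFinset f = {u})
    (hfQ : f ∉ nbhd T Q) (hz : z ∈ R) (hne : ∀ q ∈ Q, φ q ≠ z) (ha : a ∈ I)
    (hne' : ∀ x ∈ nbhd T Q, x ≠ u → φ x ≠ a) (hadj : ∀ q ∈ Q, T.Adj q u → H.Adj (φ q) a)
    (hza : H.Adj z a) :
    ∃ φ', IsPartialEmbedding T H R I (insert f Q) (nbhd T (insert f Q)) φ' := by
  have hfu : ∀ x, T.Adj f x ↔ x = u := fun x ↦ by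
    rw [← T.mem_neighborFinset, hf, mem_singleton]
  have huQ : u ∉ Q := fun huQ ↦ hfQ (mem_nbhd.2 ⟨u, huQ, ((hfu u).2 rfl).symm⟩)
  have hext := h.update_right huQ ha hne' hadj
  rw [insert_eq, ← hf] at hext
  refine ⟨_, hext.update_nbhd_insert hfQ hz (fun q hq ↦ ?_) fun x hx ↦ ?_⟩
  · rw [Function.update_of_ne (ne_of_mem_of_not_mem hq huQ)]
    exact hne q hq
  · rwa [(hfu x).1 hx, Function.update_self]

lemma exists_insert_of_neighborFinset_eq_pair
    (h : IsPartialEmbedding T H R I Q (nbhd T Q) φ) (hf : T.neighborFinset f = {u, u'})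
    (huu' : u ≠ u') (hfQ : f ∉ nbhd T Q) (hdisj : ∀ x, T.Adj f x → x ∉ nbhd T Q) (hz : z ∈ R)
    (hne : ∀ q ∈ Q, φ q ≠ z) (hdeg : 2 ≤ degreeIn H z (I \ (nbhd T Q).image φ)) :
    ∃ φ', IsPartialEmbedding T H R I (insert f Q) (nbhd T (insert f Q)) φ' := by
  obtain ⟨a, ha, a', ha', haa'⟩ := one_lt_card.1 hdeg
  simp only [mem_filter, mem_sdiff, mem_image, not_exists, not_and] at ha ha'
  have hfu : ∀ x, T.Adj f x ↔ x = u ∨ x = u' := fun x ↦ by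
    rw [← T.mem_neighborFinset, hf, mem_insert, mem_singleton]
  have hQ : ∀ x, T.Adj f x → x ∉ Q := fun x hx hxQ ↦ hfQ (mem_nbhd.2 ⟨x, hxQ, hx.symm⟩)
  have hu := (hfu u).2 (.inl rfl)
  have hu' := (hfu u').2 (.inr rfl)
  have hext := (h.update_right (hQ u' hu') ha'.1.1 (fun x hx _ ↦ ha'.1.2 x hx) fun q hq hqu' ↦
    absurd (mem_nbhd.2 ⟨q, hq, hqu'⟩) (hdisj u' hu')).update_right (hQ u hu) ha.1.1 ?_
      fun q hq hqu ↦ absurd (mem_nbhd.2 ⟨q, hq, hqu⟩) (hdisj u hu)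
  · rw [← singleton_union, ← singleton_union, ← union_assoc, singleton_union, ← hf] at hext
    refine ⟨_, hext.update_nbhd_insert hfQ hz (fun q hq ↦ ?_) fun x hx ↦ ?_⟩
    · rw [Function.update_of_ne (ne_of_mem_of_not_mem hq (hQ u hu)),
        Function.update_of_ne (ne_of_mem_of_not_mem hq (hQ u' hu'))]
      exact hne q hq
    · obtain rfl | rfl := (hfu x).1 hx
      · rw [Function.update_self]
        exact ha.2
      · rw [Function.update_of_ne huu'.symm, Function.update_self]
        exact ha'.2
  · refine forall_mem_insert _ _ _ |>.2 ⟨fun _ ↦ ?_, fun x hx _ ↦ ?_⟩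
    · rw [Function.update_self]
      exact haa'.symm
    · rw [Function.update_of_ne (ne_of_mem_of_not_mem hx (hdisj u' hu'))]
      exact ha.1.2 x hx

end IsPartialEmbedding

lemma exists_isPartialEmbedding_of_neighborFinset_eq_singleton [Fintype V]
    (hQ : ∀ q ∈ Q, T.neighborFinset q = {u}) (ha : a ∈ I) (hcard : #Q ≤ degreeIn H a R) :
    ∃ φ, IsPartialEmbedding T H R I Q (nbhd T Q) φ := by
  have : Nonempty W := ⟨a⟩
  have hqu : ∀ q ∈ Q, ∀ x, T.Adj q x ↔ x = u := fun q hq x ↦ by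
    rw [← T.mem_neighborFinset, hQ q hq, mem_singleton]
  have huQ : u ∉ Q := fun hu ↦ T.irrefl ((hqu u hu u).2 rfl)
  obtain ⟨θ, hθ, hθR⟩ := exists_injOn_of_card_le (A := Q) (B := {z ∈ R | H.Adj a z}) hcard
  simp only [mem_filter] at hθR
  have hnbhd : ∀ x ∈ nbhd T Q, x = u := fun x hx ↦
    have ⟨q, hq, hqx⟩ := mem_nbhd.1 hx
    (hqu q hq x).1 hqx
  have hθQ : ∀ q ∈ Q, Function.update θ u a q = θ q := fun q hq ↦
    Function.update_of_ne (ne_of_mem_of_not_mem hq huQ) _ _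
  refine ⟨Function.update θ u a, disjoint_right.2 fun x hx ↦ hnbhd x hx ▸ huQ,
    hθ.congr fun q hq ↦ (hθQ q hq).symm, fun x hx y hy _ ↦ (hnbhd x hx).trans (hnbhd y hy).symm,
    fun q hq ↦ hθQ q hq ▸ (hθR q hq).1, fun x hx ↦ ?_, fun q hq x h ↦ mem_nbhd.2 ⟨q, hq, h⟩,
    fun q hq x hqx ↦ ?_⟩
  · rwa [hnbhd x hx, Function.update_self]
  · rw [hθQ q hq, (hqu q hq x).1 hqx, Function.update_self]
    exact (hθR q hq).2.symm

end PartialEmbedding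

/-- No vertex is adjacent to all vertices of a matching with `m` edges. -/
def FanFree [Fintype W] (G : SimpleGraph W) (m : ℕ) : Prop :=
  ∀ v, ¬ HasMatchingIn G (G.neighborFinset v) m

section Dense

variable {G H : SimpleGraph W} {C J S S' Y Z : Finset W} {y z : W} {d k : ℕ}

lemma card_le_degreeIn_add_of_subset (h : S ⊆ S') (hz : #S' ≤ degreeIn H z S' + k) :
    #S ≤ degreeIn H z S + k := by
  have := degreeIn_sdiff_add (G := H) (w := z) h
  have := degreeIn_le_card (G := H) (w := z) (S := S' \ S)
  have := card_sdiff_add_card_eq_card h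
  omega

lemma exists_card_le_degreeIn_add (hJZ : Disjoint J Z) (hZ : ∀ z ∈ Z, #J ≤ degreeIn H z J + k)
    (hcard : #Z * k < (d + 1) * #J) : ∃ a ∈ J, #Z ≤ degreeIn H a Z + d := by
  obtain ⟨a, ha, hle⟩ := exists_degreeIn_le (G := Hᶜ) (A := J) (B := Z) (fun z hz ↦ by
    have := degreeIn_add_compl (G := H) (disjoint_right.1 hJZ hz)
    have := hZ z hz
    omega) hcard
  have := degreeIn_add_compl (G := H) (disjoint_left.1 hJZ ha)
  exact ⟨a, ha, by omega⟩

variable [Fintype W]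

lemma degreeIn_le_of_not_hasMatchingIn (hYC : Disjoint Y C) (hy : #C ≤ degreeIn G y C + d)
    (hY : ∀ b ∈ Y, #C ≤ degreeIn G b C + d) (hC : 2 * d + k + 1 ≤ #C)
    (hM : ¬ HasMatchingIn G (G.neighborFinset y) (k + 1)) : degreeIn G y Y ≤ k := by
  by_contra! hlt
  obtain ⟨B, hB, hBcard⟩ := exists_subset_card_eq (s := {x ∈ Y | G.Adj y x}) hlt
  have hBY : ∀ b ∈ B, b ∈ Y ∧ G.Adj y b := fun b hb ↦ mem_filter.1 (hB hb)
  have hdisj : Disjoint B {x ∈ C | G.Adj y x} :=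
    (hYC.mono_right (filter_subset _ _)).mono_left fun b hb ↦ (hBY b hb).1
  have hmatch := hasMatchingIn_of_forall_card_le_degreeIn (G := G) hdisj fun b hb ↦ by
    have := card_le_degreeIn_add_of_subset (S := {x ∈ C | G.Adj y x}) (filter_subset _ _)
      (hY b (hBY b hb).1)
    rw [degreeIn] at hy
    omega
  rw [hBcard] at hmatch
  refine hM (hmatch.mono (union_subset (fun b hb ↦ ?_) fun x hx ↦ ?_))
  · exact (G.mem_neighborFinset y b).2 (hBY b hb).2
  · exact (G.mem_neighborFinset y x).2 (mem_filter.1 hx).2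

end Dense

namespace IsPendantFamily

variable [Fintype V] {T : SimpleGraph V} {G H : SimpleGraph W} {C I J R Y Z : Finset W}
  {L F F' Q : Finset V} {u₁ u f : V} {φ : V → W} {k : ℕ}

lemma notMem_nbhd (hF : IsPendantFamily T u₁ L F) (hQ : Q ⊆ L ∪ F) (hf : f ∈ L ∪ F) :
    f ∉ nbhd T Q := fun h ↦
  have ⟨_, hq, hqf⟩ := mem_nbhd.1 h
  hF.isIndepSet (hQ hq) hf hqf.ne hqf

lemma card_le_card_sdiff_image_nbhd_add (hF : IsPendantFamily T u₁ L F) (hQ : Q ⊆ L ∪ F) :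
    #I ≤ #(I \ (nbhd T Q).image φ) + 2 * #Q := by
  have := le_card_sdiff ((nbhd T Q).image φ) I
  have := card_image_le (s := nbhd T Q) (f := φ)
  have := card_nbhd_le fun q hq ↦ hF.degree_le_two (hQ hq)
  omega

lemma degreeIn_le_one (hF : IsPendantFamily T u₁ L F) (hQ : Q ⊆ L ∪ F) (hf : f ∈ F) (hfQ : f ∉ Q)
    (huu₁ : u ≠ u₁) (hfu : T.Adj u f) (hu : degreeIn T u F ≤ 2) : degreeIn T u Q ≤ 1 := by
  have hsub : insert f {e ∈ Q | T.Adj u e} ⊆ {e ∈ F | T.Adj u e} := by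
    refine insert_subset_iff.2 ⟨mem_filter.2 ⟨hf, hfu⟩, fun e he ↦ ?_⟩
    obtain ⟨he, hue⟩ := mem_filter.1 he
    refine mem_filter.2 ⟨(mem_union.1 (hQ he)).resolve_left fun heL ↦ huu₁ ?_, hue⟩
    rwa [T.adj_comm, ← T.mem_neighborFinset, hF.neighborFinset_eq e heL, mem_singleton] at hue
  have hcard := card_le_card hsub
  rw [card_insert_of_notMem fun h ↦ hfQ (mem_filter.1 h).1] at hcard
  rw [degreeIn] at hu ⊢
  omega

lemma exists_insert_of_forall_card_le_degreeIn (hF : IsPendantFamily T u₁ L F)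
    (h : IsPartialEmbedding T H R I Q (nbhd T Q) φ) (hQ : Q ⊆ L ∪ F) (hf : f ∈ F) (hfQ : f ∉ Q)
    (hR : ∀ z ∈ R, #I ≤ degreeIn H z I + k) (hQR : #Q < #R) (hcard : 2 * #Q + 2 * k + 2 ≤ #I) :
    ∃ φ', IsPartialEmbedding T H R I (insert f Q) (nbhd T (insert f Q)) φ' := by
  have hfQ' : f ∉ nbhd T Q := hF.notMem_nbhd hQ (mem_union_right _ hf)
  obtain ⟨z, hz, hzQ⟩ := exists_mem_notMem_of_card_lt_card
    ((card_image_le (s := Q) (f := φ)).trans_lt hQR)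
  have hne : ∀ q ∈ Q, φ q ≠ z := fun q hq hqz ↦ hzQ (mem_image.2 ⟨q, hq, hqz⟩)
  set I' := I \ (nbhd T Q).image φ
  have hI' : #I ≤ #I' + 2 * #Q := hF.card_le_card_sdiff_image_nbhd_add hQ
  have hR' : ∀ z ∈ R, #I' ≤ degreeIn H z I' + k := fun z hz ↦
    card_le_degreeIn_add_of_subset sdiff_subset (hR z hz)
  obtain ⟨u, huu₁, hu, hdeg⟩ | ⟨u, u', huu', hu, hdisj⟩ := hF.leaf_or_degree_two f hf
  · have hfu : T.Adj u f := by
      rw [T.adj_comm, ← T.mem_neighborFinset, hu, mem_singleton]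
    have hE : #{e ∈ Q | T.Adj u e} ≤ 1 := hF.degreeIn_le_one hQ hf hfQ huu₁ hfu hdeg
    have hS : #(insert z ({e ∈ Q | T.Adj u e}.image φ)) ≤ 2 :=
      (card_insert_le _ _).trans (Nat.succ_le_succ (card_image_le.trans hE))
    obtain ⟨a, ha, hadj⟩ := exists_forall_adj (G := H) (A := I') (forall_mem_insert _ _ _ |>.2
      ⟨hR' z hz, forall_mem_image.2 fun e he ↦ hR' _ (h.left_mem e (mem_filter.1 he).1)⟩)
      ((Nat.mul_le_mul_right k hS).trans_lt (by omega))
    rw [mem_sdiff, mem_image] at ha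
    exact h.exists_insert_of_neighborFinset_eq_singleton hu hfQ' hz hne ha.1
      (fun x hx _ hxa ↦ ha.2 ⟨x, hx, hxa⟩) (fun q hq hqu ↦ hadj _ (mem_insert_of_mem
        (mem_image_of_mem _ (mem_filter.2 ⟨hq, hqu.symm⟩)))) (hadj z (mem_insert_self _ _))
  · have hz₂ : 2 ≤ degreeIn H z I' := by
      have := hR' z hz
      omega
    refine h.exists_insert_of_neighborFinset_eq_pair hu huu' hfQ' (fun x hfx hx ↦ ?_) hz hne hz₂
    obtain ⟨q, hq, hqx⟩ := mem_nbhd.1 hx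
    exact hfQ (hdisj q (hQ hq) x hfx hqx ▸ hq)

lemma exists_isPartialEmbedding_union (hF : IsPendantFamily T u₁ L F) (hQ : Q ⊆ L)
    (hR : ∀ z ∈ R, #I ≤ degreeIn H z I + k)
    (h : ∃ φ, IsPartialEmbedding T H R I Q (nbhd T Q) φ) (hF' : F' ⊆ F) (hcard : #(Q ∪ F') ≤ #R)
    (hcard' : 2 * #(Q ∪ F') + 2 * k ≤ #I) :
    ∃ φ, IsPartialEmbedding T H R I (Q ∪ F') (nbhd T (Q ∪ F')) φ := by
  induction F' using Finset.induction_on with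
  | empty => rwa [union_empty]
  | insert f F' hf ih =>
    obtain ⟨hfF, hF'⟩ := insert_subset_iff.1 hF'
    have hfQ : f ∉ Q ∪ F' := by
      rw [mem_union, not_or]
      exact ⟨fun hfQ ↦ disjoint_left.1 hF.disjoint (hQ hfQ) hfF, hf⟩
    rw [union_insert] at hcard hcard' ⊢
    rw [card_insert_of_notMem hfQ] at hcard hcard'
    obtain ⟨φ, hφ⟩ := ih hF' (by omega) (by omega)
    exact hF.exists_insert_of_forall_card_le_degreeIn hφ (union_subset_union hQ hF') hfF hfQ hR
      (by omega) (by omega)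

lemma contains_of_isClique (hF : IsPendantFamily T u₁ L F) (hcard : 2 * k ≤ #L + #F)
    (hF₂ : 2 ≤ #F) (hk : 8 ≤ k) (hn : k ^ 2 + k + 1 ≤ Fintype.card V) (hJ : H.IsClique ↑J)
    (hJcard : Fintype.card V ≤ #J + 2 * k) (hJZ : Disjoint J Z)
    (hZcard : Fintype.card V ≤ #J + #Z) (hZ : ∀ z ∈ Z, #J ≤ degreeIn H z J + k) :
    Contains H T := by
  obtain ⟨R, hRZ, hR⟩ := exists_subset_card_eq (s := Z) (n := Fintype.card V - #J) (by omega)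
  have hJR : Disjoint J R := hJZ.mono_right hRZ
  have hZR : ∀ z ∈ R, #J ≤ degreeIn H z J + k := fun z hz ↦ hZ z (hRZ hz)
  obtain ⟨a, ha, hRa⟩ := exists_card_le_degreeIn_add (d := 2) hJR hZR <| by
    have : #R * k ≤ 2 * k * k := Nat.mul_le_mul_right k (by omega)
    nlinarith
  have hRa' := degreeIn_le_card (G := H) (w := a) (S := R)
  obtain ⟨Q, hQL, hQ⟩ := exists_subset_card_eq (min_le_left #L (degreeIn H a R))
  obtain ⟨F', hF'F, hF'⟩ := exists_subset_card_eq (s := F) (n := #R - #Q) (by omega)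
  have hQF' : #(Q ∪ F') = #R := by
    rw [card_union_of_disjoint (disjoint_of_subset_left hQL
      (disjoint_of_subset_right hF'F hF.disjoint))]
    omega
  have h9 : 9 * k ≤ Fintype.card V := by nlinarith
  obtain ⟨φ, hφ⟩ := hF.exists_isPartialEmbedding_union hQL hZR
    (exists_isPartialEmbedding_of_neighborFinset_eq_singleton
      (fun q hq ↦ hF.neighborFinset_eq q (hQL hq)) ha (hQ.trans_le (min_le_right _ _)))
    hF'F (by omega) (by omega)
  exact hφ.contains hJ hJR.symm (by omega)

variable [Fintype W]

lemma contains_compl_of_forall_card_le_degreeIn (hF : IsPendantFamily T u₁ L F)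
    (hcard : 2 * k ≤ #L + #F) (hF₂ : 2 ≤ #F) (hk : 8 ≤ k) (hn : k ^ 2 + k + 1 ≤ Fintype.card V)
    (hG : FanFree G (k + 1)) (hYC : Disjoint Y C) (hY : ∀ y ∈ Y, #C ≤ degreeIn G y C + 1)
    (hC : 2 * (k + 1) < #C) (hYcard : Fintype.card V ≤ #Y) : Contains Gᶜ T := by
  have hYmatch : ¬ HasMatchingIn G Y (k + 1) := fun h ↦ by
    obtain ⟨S, hSY, hS, hSmatch⟩ := h.exists_subset_card_eq_two_mul
    obtain ⟨a, -, ha⟩ := exists_forall_adj (fun y hy ↦ hY y (hSY hy)) (by omega)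
    exact hG a (hSmatch.mono fun y hy ↦ (G.mem_neighborFinset a y).2 (ha y hy).symm)
  obtain ⟨J, hJY, hJ, hJcard⟩ := exists_isIndepSet_of_not_hasMatchingIn hYmatch
  have := card_sdiff_add_card_eq_card hJY
  refine hF.contains_of_isClique hcard hF₂ hk hn (G.isClique_compl.2 hJ) (Z := Y \ J)
    (by omega) disjoint_sdiff (by omega) fun z hz ↦ ?_
  obtain ⟨hzY, hzJ⟩ := mem_sdiff.1 hz
  have := degreeIn_le_of_not_hasMatchingIn hYC (hY z hzY) hY (by omega) (hG z)
  have := degreeIn_mono (G := G) (w := z) hJY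
  have := degreeIn_add_compl (G := G) hzJ
  omega

end IsPendantFamily

section LargeDegree

variable [Fintype V] {T : SimpleGraph V} {G H : SimpleGraph W} {I R : Finset W}
  {L F Q S : Finset V} {u u₁ f : V} {w : W} {φ : V → W} {k : ℕ}

lemma isBranchUnion_of_neighborFinset_eq_singleton (hS : ∀ l ∈ S, T.neighborFinset l = {u}) :
    IsBranchUnion T u S where
  notMem hu := T.irrefl ((T.mem_neighborFinset u u).1 (by simp [hS u hu]))
  eq_of_adj x hx y _ hxy := by rwa [← T.mem_neighborFinset, hS x hx, mem_singleton] at hxy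

lemma IsPartialEmbedding.exists_insert_of_forall_exists_adj
    (h : IsPartialEmbedding T H R I Q (nbhd T Q) φ) (hf : T.neighborFinset f = {u})
    (hfQ : f ∉ nbhd T Q) (hI : #(nbhd T Q) < #I)
    (hR : ∀ a ∈ I, ∃ z ∈ R \ Q.image φ, H.Adj z a) :
    ∃ φ', IsPartialEmbedding T H R I (insert f Q) (nbhd T (insert f Q)) φ' := by
  obtain ⟨a, ha, hne, hadj⟩ : ∃ a ∈ I, (∀ x ∈ nbhd T Q, x ≠ u → φ x ≠ a) ∧
      ∀ q ∈ Q, T.Adj q u → H.Adj (φ q) a := by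
    by_cases hu : u ∈ nbhd T Q
    · exact ⟨φ u, h.right_mem u hu, fun x hx hxu hφ ↦ hxu (h.injOn_right hx hu hφ),
        fun q hq hqu ↦ h.map_adj q hq u hqu⟩
    · obtain ⟨a, ha, hφ⟩ := exists_mem_notMem_of_card_lt_card
        ((card_image_le (s := nbhd T Q) (f := φ)).trans_lt hI)
      exact ⟨a, ha, fun x hx _ hxa ↦ hφ (mem_image.2 ⟨x, hx, hxa⟩),
        fun q hq hqu ↦ absurd (mem_nbhd.2 ⟨q, hq, hqu⟩) hu⟩
  obtain ⟨z, hz, hza⟩ := hR a ha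
  rw [mem_sdiff, mem_image] at hz
  exact h.exists_insert_of_neighborFinset_eq_singleton hf hfQ hz.1
    (fun q hq hqz ↦ hz.2 ⟨q, hq, hqz⟩) ha hne hadj hza

variable [Fintype W]

lemma contains_of_card_le_degreeIn_add (hL : ∀ l ∈ L, T.neighborFinset l = {u})
    (hLcard : 3 * k ≤ #L) (hI : H.IsClique ↑I)
    (hwI : Fintype.card V ≤ degreeIn H w I + 3 * k + 1)
    (hw : Fintype.card V ≤ H.degree w + 1) : Contains H T := by
  have hdeg := degreeIn_add_degreeIn_compl (G := H) (w := w) (S := I)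
  obtain ⟨S, hSL, hS⟩ := exists_subset_card_eq (min_le_left #L (degreeIn H w Iᶜ))
  have hbranch := isBranchUnion_of_neighborFinset_eq_singleton fun l hl ↦ hL l (hSL hl)
  have hSindep : T.IsIndepSet ↑S := fun x hx y hy _ hxy ↦ hbranch.notMem <| by
    rw [← T.mem_neighborFinset, hL x (hSL hx), mem_singleton] at hxy
    exact hxy ▸ hy
  have hSc : #(Sᶜ.erase u) + #S + 1 = Fintype.card V := by
    have := card_erase_add_one (mem_compl.2 hbranch.notMem)
    have := card_compl_add_card S
    omega
  have hTS : degreeIn T u Sᶜ ≤ #(Sᶜ.erase u) := degreeIn_erase_self (G := T) ▸ degreeIn_le_card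
  have hwP : degreeIn H w {x ∈ Iᶜ | H.Adj w x} = degreeIn H w Iᶜ := by
    simp [degreeIn, filter_filter]
  have hwQ : degreeIn H w {x ∈ I | H.Adj w x} = degreeIn H w I := by
    simp [degreeIn, filter_filter]
  have hSP : #S ≤ degreeIn H w Iᶜ := hS.trans_le (min_le_right _ _)
  have hSQ : #(Sᶜ.erase u) ≤ degreeIn H w I := by omega
  refine hbranch.contains (P := {x ∈ Iᶜ | H.Adj w x}) (Q := {x ∈ I | H.Adj w x}) (by simp)
    (by simp) (disjoint_compl_left.mono (filter_subset _ _) (filter_subset _ _)) (.inr hSindep)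
    (hI.subset (coe_subset.2 (filter_subset _ _))) hSP (hwP.symm ▸ degreeIn_le_card.trans hSP) hSQ
    (hwQ.symm ▸ hTS.trans hSQ)

lemma IsPendantFamily.exists_insert_of_forall_degree_lt (hF : IsPendantFamily T u₁ L F)
    (hcard : 2 * k ≤ #L + #F) (hF₂ : 2 ≤ #F) (hk : 8 ≤ k) (hn : k ^ 2 + k + 1 ≤ Fintype.card V)
    (hG : FanFree G (k + 1)) (hT : ¬ Contains Gᶜ T) (hI : ∀ a ∈ I, G.degree a < Fintype.card V)
    (h : IsPartialEmbedding T Gᶜ Iᶜ I Q (nbhd T Q) φ) (hQ : Q ⊆ L ∪ F) (hf : f ∈ L ∪ F)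
    (hfQ : f ∉ Q) (hIcard : 2 * #Q + 2 * (k + 1) < #I) (hcompl : Fintype.card V + #Q ≤ #Iᶜ) :
    ∃ φ', IsPartialEmbedding T Gᶜ Iᶜ I (insert f Q) (nbhd T (insert f Q)) φ' := by
  have hfQ' := hF.notMem_nbhd hQ hf
  have hnbhd := card_nbhd_le fun q hq ↦ hF.degree_le_two (hQ hq)
  have hY : Fintype.card V ≤ #(Iᶜ \ Q.image φ) := by
    have := le_card_sdiff (Q.image φ) Iᶜ
    have := card_image_le (s := Q) (f := φ)
    omega
  have hR : ∀ a ∈ I, ∃ z ∈ Iᶜ \ Q.image φ, Gᶜ.Adj z a := fun a ha ↦ by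
    simp only [Gᶜ.adj_comm _ a]
    have := degreeIn_add_compl (G := G) (w := a) (S := Iᶜ \ Q.image φ) (by simp [ha])
    have := degreeIn_le_degree (G := G) (w := a) (S := Iᶜ \ Q.image φ)
    have := hI a ha
    exact degreeIn_pos_iff.1 (by omega)
  have hleaf : ∀ u, T.neighborFinset f = {u} → _ := fun u hu ↦
    h.exists_insert_of_forall_exists_adj hu hfQ' (by omega) hR
  obtain hf | hf := mem_union.1 hf
  · exact hleaf u₁ (hF.neighborFinset_eq f hf)
  obtain ⟨u, -, hu, -⟩ | ⟨u, u', huu', hu, hdisj⟩ := hF.leaf_or_degree_two f hf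
  · exact hleaf u hu
  by_contra hno
  have hsdiff := hF.card_le_card_sdiff_image_nbhd_add (I := I) (φ := φ) hQ
  refine hT (hF.contains_compl_of_forall_card_le_degreeIn hcard hF₂ hk hn hG
    (Y := Iᶜ \ Q.image φ) (C := I \ (nbhd T Q).image φ)
    (disjoint_compl_left.mono sdiff_subset sdiff_subset) (fun z hz ↦ ?_) (by omega) hY)
  have hzI : z ∉ I \ (nbhd T Q).image φ := fun h ↦
    mem_compl.1 (mem_sdiff.1 hz).1 (mem_sdiff.1 h).1
  have := degreeIn_add_compl (G := G) hzI
  by_contra! hlt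
  rw [mem_sdiff, mem_image] at hz
  refine hno (h.exists_insert_of_neighborFinset_eq_pair hu huu' hfQ' (fun x hfx hx ↦ ?_) hz.1
    (fun q hq hqz ↦ hz.2 ⟨q, hq, hqz⟩) (by omega))
  obtain ⟨q, hq, hqx⟩ := mem_nbhd.1 hx
  exact hfQ (hdisj q (hQ hq) x hfx hqx ▸ hq)

lemma IsPendantFamily.exists_card_le_degree (hF : IsPendantFamily T u₁ L F)
    (hcard : 2 * k ≤ #L + #F) (hF₂ : 2 ≤ #F) (hk : 8 ≤ k) (hn : k ^ 2 + k + 1 ≤ Fintype.card V)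
    (hG : FanFree G (k + 1)) (hT : ¬ Contains Gᶜ T)
    (hW : 2 * Fintype.card V ≤ Fintype.card W + 1) (hI : G.IsIndepSet ↑I)
    (hIcard : Fintype.card V ≤ #I + 2 * k) : ∃ a ∈ I, Fintype.card V ≤ G.degree a := by
  by_contra! hdeg
  have h9 : 9 * k + 1 ≤ Fintype.card V := by nlinarith
  have hcompl := card_compl_add_card I
  have hLF := card_union_of_disjoint hF.disjoint
  have hmain : ∀ q ≤ Fintype.card V - #I, ∃ Q ⊆ L ∪ F, #Q = q ∧
      ∃ φ, IsPartialEmbedding T Gᶜ Iᶜ I Q (nbhd T Q) φ := by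
    intro q
    induction q with
    | zero =>
      obtain ⟨a, ha⟩ : I.Nonempty := card_pos.1 (by omega)
      exact fun _ ↦ ⟨∅, empty_subset _, card_empty,
        exists_isPartialEmbedding_of_neighborFinset_eq_singleton (u := u₁) (by simp) ha (by simp)⟩
    | succ q ih =>
      intro hq
      obtain ⟨Q, hQ, rfl, φ, hφ⟩ := ih (by omega)
      obtain ⟨f, hf, hfQ⟩ := exists_mem_notMem_of_card_lt_card (s := Q) (t := L ∪ F) (by omega)
      exact ⟨insert f Q, insert_subset hf hQ, card_insert_of_notMem hfQ,
        hF.exists_insert_of_forall_degree_lt hcard hF₂ hk hn hG hT hdeg hφ hQ hf hfQ (by omega)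
          (by omega)⟩
  obtain ⟨Q, -, hQ, φ, hφ⟩ := hmain _ le_rfl
  exact hT (hφ.contains (G.isClique_compl.2 hI) disjoint_compl_left (by omega))

end LargeDegree

section Bipartition

variable {G : SimpleGraph W} {I J X : Finset W} {w x y z : W} {n k q : ℕ}

lemma card_sub_lt_card_filter_exists_adj {A B : Finset W} {d : ℕ} (hAB : Disjoint A B)
    (hM : ¬ HasMatchingIn G (A ∪ B) (k + 1)) (hA : #A = k + 1 + d) :
    ∃ S ⊆ A, #{b ∈ B | ∃ a ∈ S, G.Adj a b} + d < #S := by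
  by_contra! hno
  exact hM ((hasMatchingIn_of_forall_card_le_add hAB hno).mono_right (by omega))

/-- By Hall's theorem the neighbours of `z` in `I` and in `J` would otherwise contain a set `S` and
a large set `B'` with no edge between them, so that some `a ∈ S`, some `b ∈ B'` and `z` together
have too many neighbours in `Gᶜ`. -/
lemma degreeIn_le_or_degreeIn_le (hI : G.IsIndepSet ↑I) (hJ : G.IsIndepSet ↑J)
    (hIJ : Disjoint I J) (hIcard : n ≤ #I + 2 * k) (hJcard : n ≤ #J + 2 * k)
    (hn : 9 * k + 1 ≤ n) (hC : ∀ w, degreeIn Gᶜ w (I ∪ J) + 2 ≤ n)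
    (hM : ¬ HasMatchingIn G ({x ∈ I | G.Adj z x} ∪ {x ∈ J | G.Adj z x}) (k + 1))
    (hzI : z ∉ I) (hzJ : z ∉ J) : degreeIn G z I ≤ k ∨ degreeIn G z J ≤ k := by
  by_contra! ⟨hkI, hkJ⟩
  obtain ⟨d, hd⟩ := Nat.exists_eq_add_of_le hkI
  obtain ⟨S, hSA, hS⟩ := card_sub_lt_card_filter_exists_adj
    (hIJ.mono (filter_subset _ _) (filter_subset _ _)) hM hd
  have hSI : S ⊆ I := hSA.trans (filter_subset _ _)
  have hScard : #S ≤ degreeIn G z I := card_le_card hSA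
  set B := ({x ∈ J | G.Adj z x} : Finset W)
  set B' := ({b ∈ B | ¬ ∃ a ∈ S, G.Adj a b} : Finset W)
  have hBcard : _ + #B' = degreeIn G z J :=
    card_filter_add_card_filter_not (s := B) fun b ↦ ∃ a ∈ S, G.Adj a b
  have hB'J : B' ⊆ J := (filter_subset _ _).trans (filter_subset _ _)
  have hSB' : ∀ a ∈ S, ∀ b ∈ B', Gᶜ.Adj a b := fun a ha b hb ↦
    (G.compl_adj a b).2 ⟨disjoint_iff_ne.1 hIJ a (hSI ha) b (hB'J hb),
      fun h ↦ (mem_filter.1 hb).2 ⟨a, ha, h⟩⟩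
  obtain ⟨a, ha⟩ : S.Nonempty := card_pos.1 (by omega)
  obtain ⟨b, hb⟩ : B'.Nonempty := card_pos.1 (by omega)
  have haJ : #B' ≤ degreeIn Gᶜ a J :=
    card_le_degreeIn hB'J (hSB' a ha)
  have hbI : #S ≤ degreeIn Gᶜ b I :=
    card_le_degreeIn hSI fun a ha ↦ (hSB' a ha b hb).symm
  simp only [degreeIn_union hIJ] at hC
  have := hC a
  have := hC b
  have := hC z
  have := degreeIn_add_compl_add_one (G := G) (hSI ha)
  have := degreeIn_add_compl_add_one (G := G) (hB'J hb)
  have := degreeIn_eq_zero_of_isIndepSet hI (hSI ha)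
  have := degreeIn_eq_zero_of_isIndepSet hJ (hB'J hb)
  have := degreeIn_add_compl (G := G) hzI
  have := degreeIn_add_compl (G := G) hzJ
  omega

variable [Fintype W]

lemma card_le_degree_of_card_le_degreeIn_compl [Fintype V] {T : SimpleGraph V} {L : Finset V}
    {u : V} (hL : ∀ l ∈ L, T.neighborFinset l = {u}) (hLcard : 3 * k ≤ #L) (hT : ¬ Contains Gᶜ T)
    (hW : Fintype.card W + 1 = 2 * Fintype.card V) (hI : G.IsIndepSet ↑I)
    (hw : Fintype.card V ≤ degreeIn Gᶜ w I + 3 * k + 1) : Fintype.card V ≤ G.degree w := by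
  by_contra! hlt
  refine hT (contains_of_card_le_degreeIn_add hL hLcard (G.isClique_compl.2 hI) hw ?_)
  rw [G.degree_compl]
  omega

/-- `X` and its complement form a nearly bipartite partition for `G`: they contain the large
independent sets `I` and `J`, respectively, and every vertex has few neighbours in the independent
set of its own side. The last field says that most vertices of `I ∪ J` are neighbours in `G` of any
given vertex. -/
structure IsNearBipartition (G : SimpleGraph W) (n k : ℕ) (I J X : Finset W) : Prop where
  isIndepSet_left : G.IsIndepSet ↑I
  isIndepSet_right : G.IsIndepSet ↑J
  card_left : n ≤ #I + 2 * k
  card_right : n ≤ #J + 2 * k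
  left_subset : I ⊆ X
  right_subset : J ⊆ Xᶜ
  degreeIn_left : ∀ x ∈ X, degreeIn G x I ≤ k
  degreeIn_right : ∀ y ∈ Xᶜ, degreeIn G y J ≤ k
  degreeIn_compl_union : ∀ w, degreeIn Gᶜ w (I ∪ J) + 2 ≤ n

namespace IsNearBipartition

lemma symm (h : IsNearBipartition G n k I J X) : IsNearBipartition G n k J I Xᶜ where
  isIndepSet_left := h.isIndepSet_right
  isIndepSet_right := h.isIndepSet_left
  card_left := h.card_right
  card_right := h.card_left
  left_subset := h.right_subset
  right_subset := (compl_compl X).symm ▸ h.left_subset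
  degreeIn_left := h.degreeIn_right
  degreeIn_right := (compl_compl X).symm ▸ h.degreeIn_left
  degreeIn_compl_union := union_comm I J ▸ h.degreeIn_compl_union

lemma disjoint (h : IsNearBipartition G n k I J X) : Disjoint I J :=
  disjoint_compl_right.mono h.left_subset h.right_subset

lemma degreeIn_compl_add (h : IsNearBipartition G n k I J X) (w : W) :
    degreeIn Gᶜ w I + degreeIn Gᶜ w J + 2 ≤ n :=
  degreeIn_union h.disjoint ▸ h.degreeIn_compl_union w

lemma card_le_degreeIn_compl_add (h : IsNearBipartition G n k I J X) (hk : 1 ≤ k) (hx : x ∈ X) :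
    #I ≤ degreeIn Gᶜ x I + k := by
  by_cases hxI : x ∈ I
  · have := degreeIn_add_compl_add_one (G := G) hxI
    have := degreeIn_eq_zero_of_isIndepSet h.isIndepSet_left hxI
    omega
  · have := degreeIn_add_compl (G := G) hxI
    have := h.degreeIn_left x hx
    omega

lemma card_add_two_le_degreeIn_add (h : IsNearBipartition G n k I J X) (hk : 1 ≤ k) (hx : x ∈ X) :
    #J + 2 ≤ degreeIn G x J + 3 * k := by
  have := h.card_le_degreeIn_compl_add hk hx
  have := h.degreeIn_compl_add x
  have := h.card_left
  have := degreeIn_add_compl (G := G) (w := x) (S := J) fun hxJ ↦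
    mem_compl.1 (h.right_subset hxJ) hx
  omega

lemma card_add_one_le_degreeIn_add (h : IsNearBipartition G n k I J X) (hy : y ∈ J) :
    #I + 1 ≤ degreeIn G y I + 2 * k := by
  have := degreeIn_add_compl_add_one (G := G) hy
  have := degreeIn_eq_zero_of_isIndepSet h.isIndepSet_right hy
  have := h.degreeIn_compl_add y
  have := h.card_right
  have := degreeIn_add_compl (G := G) (disjoint_right.1 h.disjoint hy)
  omega

lemma degreeIn_self_le (h : IsNearBipartition G n k I J X) (hG : FanFree G (k + 1)) (hk : 1 ≤ k)
    (hn : 9 * k + 1 ≤ n) (hx : x ∈ X) : degreeIn G x X ≤ k := by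
  have hJ : ∀ x ∈ X, #J ≤ degreeIn G x J + (3 * k - 2) := fun x hx ↦ by
    have := h.card_add_two_le_degreeIn_add hk hx
    omega
  have := h.card_right
  exact degreeIn_le_of_not_hasMatchingIn (disjoint_compl_right.mono_right h.right_subset)
    (hJ x hx) hJ (by omega) (hG x)

/-- A matching in `X ∩ N(y)` extends by matching all of `Xᶜ ∩ N(y)` greedily into the rest of
`I ∩ N(y)`. -/
lemma not_hasMatchingIn (h : IsNearBipartition G n k I J X) (hG : FanFree G (k + 1))
    (hk : 1 ≤ k) (hn : 9 * k + 1 ≤ n) (hy : y ∈ J) (hq : q + degreeIn G y Xᶜ = k) :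
    ¬ HasMatchingIn G {x ∈ X | G.Adj y x} (q + 1) := by
  intro hM
  obtain ⟨S, hS, hScard, hSM⟩ := hM.exists_subset_card_eq_two_mul
  set B := ({x ∈ Xᶜ | G.Adj y x} : Finset W)
  set A := ({x ∈ I | G.Adj y x} : Finset W) \ S
  have hAI : A ⊆ I := sdiff_subset.trans (filter_subset _ _)
  have hA : #I + 1 ≤ #A + 2 * k + #S := by
    have := h.card_add_one_le_degreeIn_add hy
    have : degreeIn G y I - #S ≤ #A := le_card_sdiff _ _
    omega
  have hB : #B = degreeIn G y Xᶜ := rfl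
  have hBA : Disjoint B A :=
    disjoint_compl_left.mono (filter_subset _ _) (hAI.trans h.left_subset)
  have hBM := hasMatchingIn_of_forall_card_le_degreeIn (G := G) hBA fun b hb ↦ by
    have := h.symm.card_add_two_le_degreeIn_add hk (mem_filter.1 hb).1
    have := degreeIn_sdiff_add (G := G) (w := b) hAI
    have := degreeIn_le_card (G := G) (w := b) (S := I \ A)
    have := card_sdiff_add_card_eq_card hAI
    have := h.card_left
    omega
  have hSBA : Disjoint S (B ∪ A) := disjoint_union_right.2
    ⟨disjoint_compl_right.mono (hS.trans (filter_subset _ _)) (filter_subset _ _),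
      disjoint_sdiff⟩
  have hunion := hSM.union hSBA hBM
  rw [show q + 1 + #B = k + 1 by omega] at hunion
  refine hG y (hunion.mono fun x hx ↦ (G.mem_neighborFinset y x).2 ?_)
  simp only [mem_union] at hx
  obtain hx | hx | hx := hx
  exacts [(mem_filter.1 (hS hx)).2, (mem_filter.1 hx).2, (mem_filter.1 (mem_sdiff.1 hx).1).2]

lemma exists_isIndepSet_card_le (h : IsNearBipartition G n k I J X) (hk : 1 ≤ k) (w : W) :
    ∃ I' : Finset W, G.IsIndepSet ↑I' ∧ n ≤ degreeIn Gᶜ w I' + 3 * k + 1 := by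
  by_cases hw : w ∈ X
  · have := h.card_le_degreeIn_compl_add hk hw
    have := h.card_left
    exact ⟨I, h.isIndepSet_left, by omega⟩
  · have := h.symm.card_le_degreeIn_compl_add hk (mem_compl.2 hw)
    have := h.card_right
    exact ⟨J, h.isIndepSet_right, by omega⟩

lemma mul_lt_card_filter_not_exists_adj (h : IsNearBipartition G n k I J X)
    (hG : FanFree G (k + 1)) (hk : 1 ≤ k) (hn : 9 * k + 1 ≤ n) (hn' : k ^ 2 + k + 1 ≤ n)
    (hy : y ∈ J) (hdeg : n ≤ G.degree y) : degreeIn G y Xᶜ * k <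
      #{x ∈ {x ∈ X | G.Adj y x} | ¬ ∃ v ∈ ({x ∈ X | G.Adj y x} : Finset W), G.Adj x v} := by
  obtain ⟨q, hq⟩ := Nat.exists_eq_add_of_le' (h.symm.degreeIn_self_le hG hk hn (h.right_subset hy))
  set g := degreeIn G y Xᶜ
  set N : Finset W := {x ∈ X | G.Adj y x}
  have hNX : N ⊆ X := filter_subset _ _
  have hN : n ≤ #N + g := hdeg.trans_eq (degreeIn_add_degreeIn_compl (S := X)).symm
  have hisolated := card_filter_exists_adj_le
    (fun x hx ↦ (degreeIn_mono hNX).trans (h.degreeIn_self_le hG hk hn (hNX hx)))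
    (h.not_hasMatchingIn hG hk hn hy hq.symm)
  have := card_filter_add_card_filter_not (s := N) fun x ↦ ∃ v ∈ N, G.Adj x v
  have : k ^ 2 + k = (k + 1) * q + g * k + g := by rw [hq]; ring
  omega

/-- Let `y ∈ J` have `g` neighbours in `Xᶜ`. More than `g * k` neighbours of `y` in `X` have no
neighbour in `X ∩ N(y)`; all their neighbours in `X` lie in the small set `X \ N(y)`, and counting
these edges from both sides gives a contradiction if `n ≤ #X`. -/
lemma card_lt (h : IsNearBipartition G n k I J X) (hG : FanFree G (k + 1)) (hk : 1 ≤ k)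
    (hn : 9 * k + 1 ≤ n) (hn' : k ^ 2 + k + 1 ≤ n) (hdeg : ∀ w, n ≤ G.degree w)
    (hW : Fintype.card W + 1 = 2 * n) : #X < n := by
  by_contra! hX
  have hcompl := card_add_card_compl X
  obtain ⟨y, hy⟩ : J.Nonempty := card_pos.1 (by have := h.card_right; omega)
  obtain ⟨e, he⟩ := Nat.exists_eq_add_of_le hX
  set g := degreeIn G y Xᶜ
  set N : Finset W := {x ∈ X | G.Adj y x}
  set M : Finset W := {x ∈ X | ¬ G.Adj y x}
  set Z : Finset W := {x ∈ N | ¬ ∃ v ∈ N, G.Adj x v}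
  have hNM : #N + #M = #X := card_filter_add_card_filter_not _
  have hN : n ≤ #N + g := (hdeg y).trans_eq (degreeIn_add_degreeIn_compl (S := X)).symm
  have hZ : g * k < #Z := h.mul_lt_card_filter_not_exists_adj hG hk hn hn' hy (hdeg y)
  have hZM : ∀ z ∈ Z, 1 + e ≤ degreeIn G z M := fun z hz ↦ by
    have hzN : degreeIn G z N = 0 := by
      by_contra hpos
      exact (mem_filter.1 hz).2 (degreeIn_pos_iff.1 (Nat.pos_of_ne_zero hpos))
    have hzX : degreeIn G z X = degreeIn G z N + degreeIn G z M := by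
      rw [← degreeIn_union (disjoint_filter_filter_not _ _ _), filter_union_filter_not_eq]
    have := degreeIn_add_degreeIn_compl (G := G) (w := z) (S := X)
    have := degreeIn_le_card (G := G) (w := z) (S := Xᶜ)
    have := hdeg z
    omega
  obtain ⟨z, hz⟩ : Z.Nonempty := card_pos.1 (by omega)
  have hg : 1 ≤ g := by
    have := (hZM z hz).trans degreeIn_le_card
    omega
  have hcount : (1 + e) * #Z ≤ #M * k := by
    by_contra! hlt
    have hM : ∀ v ∈ M, degreeIn G v Z ≤ k := fun v hv ↦
      (degreeIn_mono ((filter_subset _ _).trans (filter_subset _ _))).trans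
        (h.degreeIn_self_le hG hk hn (mem_filter.1 hv).1)
    obtain ⟨z, hz, hle⟩ := exists_degreeIn_le hM (d := e) (by rwa [add_comm e])
    exact absurd (hZM z hz) (by omega)
  have : (1 + e) * (g * k + 1) ≤ (g + e) * k :=
    (Nat.mul_le_mul_left _ hZ).trans (hcount.trans (Nat.mul_le_mul_right _ (by omega)))
  have : k * e ≤ g * (k * e) := Nat.le_mul_of_pos_left _ hg
  nlinarith

variable [Fintype V] {T : SimpleGraph V}

lemma contains_compl (h : IsNearBipartition G (Fintype.card V) k I J X) (hT : T.IsTree)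
    (hG : FanFree G (k + 1)) (hk : 8 ≤ k) (hn : k ^ 2 + k + 1 ≤ Fintype.card V)
    (hW : Fintype.card W + 1 = 2 * Fintype.card V) : Contains Gᶜ T := by
  wlog hX : Fintype.card V ≤ #X generalizing I J X with hswap
  · have := card_add_card_compl X
    exact hswap h.symm (by omega)
  obtain ⟨u, L, F, hF, hcard, hL | hF₂⟩ := exists_isPendantFamily hT hk hn
  · by_contra hno
    exact (h.card_lt hG (by omega) (by nlinarith) hn
      (fun w ↦ have ⟨_, hI, hw⟩ := h.exists_isIndepSet_card_le (by omega) w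
        card_le_degree_of_card_le_degreeIn_compl hF.neighborFinset_eq hL hno hW hI hw)
      hW).not_ge hX
  · refine hF.contains_of_isClique hcard hF₂ hk hn (G.isClique_compl.2 h.isIndepSet_left)
      h.card_left disjoint_sdiff (Z := X \ I) ?_ fun z hz ↦
        h.card_le_degreeIn_compl_add (by omega) (mem_sdiff.1 hz).1
    have := card_sdiff_add_card_eq_card h.left_subset
    omega

end IsNearBipartition

lemma FanFree.exists_isIndepSet_subset_neighborFinset (hG : FanFree G (k + 1))
    (hz : n ≤ G.degree z) :
    ∃ I ⊆ G.neighborFinset z, G.IsIndepSet ↑I ∧ n ≤ #I + 2 * k := by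
  obtain ⟨I, hIz, hI, hIcard⟩ := exists_isIndepSet_of_not_hasMatchingIn (hG z)
  exact ⟨I, hIz, hI, hz.trans (by rwa [← G.card_neighborFinset_eq_degree])⟩

lemma FanFree.exists_isNearBipartition (hG : FanFree G (k + 1)) (hI : G.IsIndepSet ↑I)
    (hJ : G.IsIndepSet ↑J) (hIJ : Disjoint I J) (hIcard : n ≤ #I + 2 * k)
    (hJcard : n ≤ #J + 2 * k) (hn : 9 * k + 1 ≤ n)
    (hC : ∀ w, degreeIn Gᶜ w (I ∪ J) + 2 ≤ n) : ∃ X, IsNearBipartition G n k I J X := by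
  have hmem : ∀ x ∈ I, degreeIn G x I ≤ k := fun x hx ↦
    (degreeIn_eq_zero_of_isIndepSet hI hx).trans_le (Nat.zero_le k)
  refine ⟨({w | w ∉ J ∧ degreeIn G w I ≤ k} : Finset W), hI, hJ, hIcard, hJcard, fun x hx ↦ ?_,
    fun x hx ↦ ?_, fun x hx ↦ ?_, fun y hy ↦ ?_, hC⟩
  · simpa using ⟨disjoint_left.1 hIJ hx, hmem x hx⟩
  · simp [hx]
  · exact (mem_filter.1 hx).2.2
  · by_cases hyJ : y ∈ J
    · exact (degreeIn_eq_zero_of_isIndepSet hJ hyJ).trans_le (Nat.zero_le k)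
    have hyI : ¬ degreeIn G y I ≤ k := by simpa [hyJ] using hy
    refine (degreeIn_le_or_degreeIn_le hI hJ hIJ hIcard hJcard hn hC (fun hM ↦ hG y ?_)
      (fun hy ↦ hyI (hmem y hy)) hyJ).resolve_left hyI
    refine hM.mono fun x hx ↦ (G.mem_neighborFinset y x).2 ?_
    obtain hx | hx := mem_union.1 hx
    exacts [(mem_filter.1 hx).2, (mem_filter.1 hx).2]

variable [Fintype V] {T : SimpleGraph V}

lemma FanFree.exists_card_le_degree (hG : FanFree G (k + 1)) (hT : T.IsTree) (hk : 8 ≤ k)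
    (hn : k ^ 2 + k + 1 ≤ Fintype.card V) (hW : Fintype.card W + 1 = 2 * Fintype.card V)
    (hno : ¬ Contains Gᶜ T) (hI : G.IsIndepSet ↑I) (hIcard : Fintype.card V ≤ #I + 2 * k) :
    ∃ a ∈ I, Fintype.card V ≤ G.degree a := by
  obtain ⟨u, L, F, hF, hcard, hL | hF₂⟩ := exists_isPendantFamily hT hk hn
  · obtain ⟨a, ha⟩ : I.Nonempty := card_pos.1 (by nlinarith)
    have := degreeIn_add_compl_add_one (G := G) ha
    have := degreeIn_eq_zero_of_isIndepSet hI ha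
    exact ⟨a, ha, card_le_degree_of_card_le_degreeIn_compl hF.neighborFinset_eq hL hno hW hI
      (by omega)⟩
  · exact hF.exists_card_le_degree hcard hF₂ hk hn hG hno hW.ge hI hIcard

lemma FanFree.contains_compl (hG : FanFree G (k + 1)) (hT : T.IsTree) (hk : 8 ≤ k)
    (hn : k ^ 2 + k + 1 ≤ Fintype.card V) (hW : Fintype.card W + 1 = 2 * Fintype.card V) :
    Contains Gᶜ T := by
  by_contra hno
  have h9 : 9 * k + 1 ≤ Fintype.card V := by nlinarith
  have : Nonempty W := Fintype.card_pos_iff.1 (by omega)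
  obtain ⟨w, hw⟩ : ∃ w, Fintype.card V ≤ G.degree w := by
    by_contra! hlt
    refine hno (contains_of_forall_card_le_degree hT rfl fun w ↦ ?_)
    have := hlt w
    rw [G.degree_compl]
    omega
  obtain ⟨I, -, hI, hIcard⟩ := hG.exists_isIndepSet_subset_neighborFinset hw
  obtain ⟨a, ha, hadeg⟩ := hG.exists_card_le_degree hT hk hn hW hno hI hIcard
  obtain ⟨J, hJa, hJ, hJcard⟩ := hG.exists_isIndepSet_subset_neighborFinset hadeg
  have hIJ : Disjoint I J := disjoint_right.2 fun x hxJ hxI ↦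
    have hax := (G.mem_neighborFinset a x).1 (hJa hxJ)
    hI ha hxI hax.ne hax
  obtain ⟨X, hX⟩ := hG.exists_isNearBipartition hI hJ hIJ hIcard hJcard h9 fun w ↦ by
    by_contra! hlt
    exact hno (contains_of_card_le_degreeIn_union hT (G.isClique_compl.2 hI)
      (G.isClique_compl.2 hJ) hIJ (w := w) (by omega) (by omega))
  exact hno (hX.contains_compl hT hG hk hn hW)

end Bipartition

section CliqueJoinMatching

variable {U : Type*} {G : SimpleGraph W} {s : Set W} {v : W} {r m : ℕ}

lemma contains_cliqueJoinMatching_iff : Contains G (cliqueJoinMatching r m) ↔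
    ∃ f : Fin r ⊕ Fin m × Bool → W, Function.Injective f ∧
      (∀ i x, .inl i ≠ x → G.Adj (f (.inl i)) (f x)) ∧
      ∀ j, G.Adj (f (.inr (j, true))) (f (.inr (j, false))) := by
  refine exists_congr fun f ↦ and_congr_right fun _ ↦ ⟨fun h ↦ ⟨fun i x hx ↦ h ?_, fun j ↦ h ?_⟩,
    fun ⟨hclique, hmatching⟩ x y hxy ↦ ?_⟩
  · exact (SimpleGraph.fromRel_adj _ _ _).2 ⟨hx, .inl (.inl ⟨i, rfl⟩)⟩
  · exact (SimpleGraph.fromRel_adj _ _ _).2 ⟨by simp, .inl (.inr ⟨j, rfl, rfl⟩)⟩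
  · obtain ⟨hne, (⟨i, rfl⟩ | ⟨j, rfl, rfl⟩) | (⟨i, rfl⟩ | ⟨j, rfl, rfl⟩)⟩ :=
      (SimpleGraph.fromRel_adj _ _ _).1 hxy
    exacts [hclique i y hne, hmatching j, (hclique i x hne.symm).symm, (hmatching j).symm]

lemma contains_cliqueJoinMatching_succ (hs : ∀ x ∈ s, G.Adj v x)
    (h : Contains (G.induce s) (cliqueJoinMatching r m)) :
    Contains G (cliqueJoinMatching (r + 1) m) := by
  obtain ⟨f, hf, hclique, hmatching⟩ := contains_cliqueJoinMatching_iff.1 h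
  have hv : ∀ x, G.Adj v (f x) := fun x ↦ hs _ (f x).2
  have hinj : Function.Injective fun x ↦ (f x : W) := Subtype.val_injective.comp hf
  refine contains_cliqueJoinMatching_iff.2
    ⟨Sum.elim (Fin.cons v fun i ↦ f (.inl i)) fun x ↦ f (.inr x), ?_, ?_, hmatching⟩
  · refine .sumElim (Fin.cons_injective_iff.2 ⟨?_, hinj.comp Sum.inl_injective⟩)
      (hinj.comp Sum.inr_injective) fun i x ↦ ?_
    · rintro ⟨i, hi⟩
      exact (hv _).ne hi.symm
    · induction i using Fin.cases with
      | zero => exact (hv _).ne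
      | succ i => exact hinj.ne Sum.inl_ne_inr
  · rintro i (j | x) hne <;> induction i using Fin.cases with
      | zero => ?_
      | succ i => ?_
    · induction j using Fin.cases with
      | zero => exact absurd rfl hne
      | succ j => exact hv _
    · induction j using Fin.cases with
      | zero => exact (hv _).symm
      | succ j => exact hclique i (.inl j) fun h ↦ hne (by simp_all)
    · exact hv _
    · exact hclique i (.inr x) Sum.inl_ne_inr

lemma HasMatchingIn.contains_cliqueJoinMatching_zero {S : Finset W} :
    HasMatchingIn G S m → Contains (G.induce ↑S) (cliqueJoinMatching 0 m) := by
  rintro ⟨A, g, hA, hg, hAg⟩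
  let e := A.equivFinOfCardEq hA
  let f : Fin m × Bool → S := fun x ↦
    have hx := hAg _ (e.symm x.1).2
    if x.2 then ⟨e.symm x.1, hx.1⟩ else ⟨g (e.symm x.1), hx.2.1⟩
  refine contains_cliqueJoinMatching_iff.2 ⟨Sum.elim Fin.elim0 f,
    .sumElim (fun i ↦ i.elim0) ?_ fun i ↦ i.elim0, fun i ↦ i.elim0,
    fun j ↦ (hAg _ (e.symm j).2).2.2.2⟩
  have hne : ∀ i j, (e.symm i : W) ≠ g (e.symm j) := fun i j h ↦
    (hAg _ (e.symm j).2).2.2.1 (h ▸ (e.symm i).2)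
  rintro ⟨i, _ | _⟩ ⟨j, _ | _⟩ h
  · have := hg (e.symm i).2 (e.symm j).2 (by simpa [f] using h)
    simpa using this
  · exact absurd (by simpa [f] using h.symm) (hne j i)
  · exact absurd (by simpa [f] using h) (hne i j)
  · simpa [f] using h

lemma Contains.of_induce {A : SimpleGraph U} (h : Contains (G.induce s) A) : Contains G A :=
  have ⟨f, hf, hadj⟩ := h
  ⟨fun x ↦ f x, Subtype.val_injective.comp hf, fun _ _ hxy ↦ hadj hxy⟩

lemma Contains.compl_of_induce {A : SimpleGraph U} (h : Contains (G.induce s)ᶜ A) :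
    Contains Gᶜ A := by
  obtain ⟨f, hf, hadj⟩ := h
  refine ⟨fun x ↦ f x, Subtype.val_injective.comp hf, fun x y hxy ↦ ?_⟩
  obtain ⟨hne, hxy⟩ := ((G.induce s).compl_adj _ _).1 (hadj hxy)
  exact (G.compl_adj _ _).2 ⟨Subtype.coe_ne_coe.2 hne, hxy⟩

end CliqueJoinMatching

section Ramsey

variable [Fintype V] {T : SimpleGraph V} {k : ℕ}

lemma contains_cliqueJoinMatching_one_or_contains_compl [Fintype W] (hT : T.IsTree) (hk : 8 ≤ k)
    (hn : k ^ 2 + k + 1 ≤ Fintype.card V) (G : SimpleGraph W)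
    (hW : Fintype.card W + 1 = 2 * Fintype.card V) :
    Contains G (cliqueJoinMatching 1 (k + 1)) ∨ Contains Gᶜ T := by
  by_cases hG : FanFree G (k + 1)
  · exact .inr (hG.contains_compl hT hk hn hW)
  · simp only [FanFree, not_forall, not_not] at hG
    obtain ⟨v, hv⟩ := hG
    exact .inl (contains_cliqueJoinMatching_succ (fun x hx ↦ (G.mem_neighborFinset v x).1 hx)
      hv.contains_cliqueJoinMatching_zero)

/-- Either `T` embeds greedily into `Gᶜ`, or some `v` has many neighbours in `G` and we apply the
induction hypothesis to `G[N(v)]`. -/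
lemma contains_cliqueJoinMatching_or_contains_compl (hT : T.IsTree) (hk : 8 ≤ k)
    (hn : k ^ 2 + k + 1 ≤ Fintype.card V) (r : ℕ) :
    ∀ {W : Type*} [Fintype W] (G : SimpleGraph W),
      (r + 2) * (Fintype.card V - 1) + 1 ≤ Fintype.card W →
      Contains G (cliqueJoinMatching (r + 1) (k + 1)) ∨ Contains Gᶜ T := by
  induction r with
  | zero =>
    intro W _ G hW
    obtain ⟨S, -, hS⟩ := exists_subset_card_eq (hW.trans_eq (card_univ (α := W)).symm)
    exact (contains_cliqueJoinMatching_one_or_contains_compl hT hk hn (G.induce (S : Set W))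
      (by simp only [coe_sort_coe, Fintype.card_coe]; omega)).imp .of_induce .compl_of_induce
  | succ r ih =>
    intro W _ G hW
    have : Nonempty W := Fintype.card_pos_iff.1 (by omega)
    by_contra! ⟨hG, hno⟩
    obtain ⟨v, hv⟩ : ∃ v, (r + 2) * (Fintype.card V - 1) + 1 ≤ G.degree v := by
      by_contra! hlt
      refine hno (contains_of_forall_card_le_degree hT rfl fun w ↦ ?_)
      have := hlt w
      rw [G.degree_compl]
      lia
    obtain h | h := ih (G.induce (G.neighborSet v))
      (hv.trans_eq (G.card_neighborSet_eq_degree v).symm)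
    · exact hG (contains_cliqueJoinMatching_succ (fun x hx ↦ hx) h)
    · exact hno h.compl_of_induce

end Ramsey

end

/-- **Corollary (upper bound)**: for `ℓ ≥ 2`, `m ≥ 9` and `n ≥ m² - m + 1`, any graph `G`
on `ℓ(n - 1) + 1` vertices contains `K_{ℓ-1} + mK_2` or its complement contains any given
tree on `n` vertices. -/
theorem ramsey_tree_cliqueJoinMatching_upper {V W : Type*} [Fintype V] [Fintype W]
    (l m n : ℕ) (hl : 2 ≤ l) (hm : 9 ≤ m) (hn : m ^ 2 - m + 1 ≤ n)
    (T : SimpleGraph V) (hT : T.IsTree) (hTcard : Fintype.card V = n)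
    (G : SimpleGraph W) (hGcard : Fintype.card W = l * (n - 1) + 1) :
    Contains G (cliqueJoinMatching (l - 1) m) ∨ Contains Gᶜ T := by
  obtain ⟨r, rfl⟩ := Nat.exists_eq_add_of_le' hl
  obtain ⟨k, rfl⟩ := Nat.exists_eq_add_of_le' (show 1 ≤ m by omega)
  subst hTcard
  have hsq : (k + 1) ^ 2 = k ^ 2 + k + (k + 1) := by ring
  exact contains_cliqueJoinMatching_or_contains_compl hT (by omega) (by omega) r G hGcard.ge
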